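/- Suppose X ~ N_n(θ₀, I_n) and consider the one-group shrinkage prior with 1/2 ≤ a < 1 applied independently to each coordinate. Let (p_n) be a sequence with p_n → ∞ and p_n = o(n), and set τ_n = ( (p_n/n) √(log(n/p_n)) )^{1/(2a)}. Then for every sequence M_n → ∞, sup_{θ₀ ∈ l₀[p_n]} E_{θ₀} Π( θ ∈ ℝⁿ : ||θ − T_{τ_n}(X)||² > M_n p_n log(n/p_n) | X ) → 0 as n → ∞, where T_{τ_n}(X) is the coordinatewise posterior mean. -/

import Mathlib

open MeasureTheory Filter Set

noncomputable section

namespace OneGroup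

/-- A one-group (global-local) shrinkage prior: the local variance `λ²` has density
`π(λ²) = K (λ²)^{-a-1} L(λ²)` on `(0,∞)`, where `L` is a positive, measurable,
non-constant slowly varying function, bounded above by `M`, and bounded below by
`c₀` on `[t₀, ∞)`. -/
structure Prior where
  K : ℝ
  a : ℝ
  L : ℝ → ℝ
  M : ℝ
  c₀ : ℝ
  t₀ : ℝ
  K_pos : 0 < K
  a_pos : 0 < a
  L_pos : ∀ t : ℝ, 0 < t → 0 < L t
  L_meas : Measurable L
  L_slow : ∀ c : ℝ, 0 < c → Tendsto (fun t => L (c * t) / L t) atTop (nhds 1)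
  L_nonconst : ∃ s : ℝ, 0 < s ∧ ∃ t : ℝ, 0 < t ∧ L s ≠ L t
  M_pos : 0 < M
  L_le : ∀ t : ℝ, 0 < t → L t ≤ M
  c₀_pos : 0 < c₀
  t₀_pos : 0 < t₀
  L_ge : ∀ t : ℝ, t₀ ≤ t → c₀ ≤ L t

/-- The (unnormalized) posterior weight, as a function of `t = λ²`, entering all
posterior expectations of functions of the shrinkage coefficient `κ = 1/(1+tτ²)`. -/
def wt (P : Prior) (x τ t : ℝ) : ℝ :=
  (1 + t * τ ^ 2) ^ (-(1:ℝ)/2) * t ^ (-P.a - 1) * P.L t *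
    Real.exp (-x ^ 2 / (2 * (1 + t * τ ^ 2)))

/-- Posterior expectation `E(g(κ) | x, τ)` of a function `g` of the shrinkage
coefficient `κ = 1/(1+λ²τ²)`. -/
def postExp (P : Prior) (g : ℝ → ℝ) (x τ : ℝ) : ℝ :=
  (∫ t in Ioi (0:ℝ), g (1 / (1 + t * τ ^ 2)) * wt P x τ t) /
    (∫ t in Ioi (0:ℝ), wt P x τ t)

/-- The posterior mean `T_τ(x) = x (1 - E(κ | x, τ))`. -/
def T (P : Prior) (τ x : ℝ) : ℝ := x * (1 - postExp P (fun κ => κ) x τ)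

/-- The marginal prior density `p_τ(θ)` of `θ`. -/
def pdens (P : Prior) (τ θ : ℝ) : ℝ :=
  ∫ u in Ioi (0:ℝ),
    (Real.sqrt (2 * Real.pi * u * τ ^ 2))⁻¹ * Real.exp (-θ ^ 2 / (2 * u * τ ^ 2)) *
      (P.K * u ^ (-P.a - 1) * P.L u)

/-- The unnormalized posterior density of `θ` given an observation `x ~ N(θ,1)`. -/
def postw (P : Prior) (τ x θ : ℝ) : ℝ := Real.exp (-(x - θ) ^ 2 / 2) * pdens P τ θ

/-- The `k`-th posterior moment of `θ` given `x`. -/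
def postMoment (P : Prior) (τ x : ℝ) (k : ℕ) : ℝ :=
  (∫ θ : ℝ, θ ^ k * postw P τ x θ) / (∫ θ : ℝ, postw P τ x θ)

/-- The posterior variance `Var(θ | x)`. -/
def postVar (P : Prior) (τ x : ℝ) : ℝ := postMoment P τ x 2 - (postMoment P τ x 1) ^ 2

/-- The standard normal density. -/
def gauss (z : ℝ) : ℝ := (Real.sqrt (2 * Real.pi))⁻¹ * Real.exp (-z ^ 2 / 2)

/-- Expectation of `f(X)` for `X ~ N(θ, 1)`. -/
def E1 (θ : ℝ) (f : ℝ → ℝ) : ℝ := ∫ x : ℝ, f x * gauss (x - θ)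

/-- Expectation of `f(X)` for `X ~ N_n(θ, I_n)`. -/
def EN (n : ℕ) (θ : Fin n → ℝ) (f : (Fin n → ℝ) → ℝ) : ℝ :=
  ∫ x : Fin n → ℝ, f x * ∏ i, gauss (x i - θ i)

/-- The posterior probability `Π(A | x)` of a set `A ⊆ ℝⁿ` given data `x`,
for the coordinatewise-independent posterior. -/
def postProb (P : Prior) (τ : ℝ) {n : ℕ} (x : Fin n → ℝ) (A : Set (Fin n → ℝ)) : ℝ :=
  (∫ θ in A, ∏ i, postw P τ (x i) (θ i)) /
    (∫ θ : Fin n → ℝ, ∏ i, postw P τ (x i) (θ i))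

/-- The set `l₀[p]` of nearly black vectors in `ℝⁿ`. -/
def nearlyBlack (n p : ℕ) : Set (Fin n → ℝ) :=
  {θ | (Finset.univ.filter fun i => θ i ≠ 0).card ≤ p}

end OneGroup

open OneGroup

/-! Conditionally on `κ = 1/(1+λ²τ²)` the posterior of `θ` is `N(x(1-κ), 1-κ)`, so the posterior
variance at `x` is determined by posterior moments of `κ`. Two bounds on it suffice:
`C τ^{2a} e^{x²/2}`, good for small `x`, and `C log(1/τ)` for every `x`, because
`x² E(κ | x) = O(log(1/τ))`. Under `N(θ₀ᵢ, 1)` the minimum of the two has expectation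
`O(log(n/p))` at each of the at most `p` nonzero coordinates and, after splitting at
`|x| = 2√log(n/p)`, `O((p/n) log(n/p))` at a zero coordinate, which is where the choice
`τ^{2a} = (p/n)√log(n/p)` enters. The expected posterior squared distance to the posterior mean is
thus `O(p log(n/p))`, uniformly in `θ₀`, and Markov's inequality concludes. -/

open scoped Topology

namespace OneGroup

section Elementary

theorem exp_neg_sq_div_le_exp_neg_sq_div (x : ℝ) {b c : ℝ} (hb : 0 < b) (hbc : b ≤ c) :
    Real.exp (-x ^ 2 / b) ≤ Real.exp (-x ^ 2 / c) := by
  rw [Real.exp_le_exp, neg_div, neg_div, neg_le_neg_iff]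
  exact div_le_div_of_nonneg_left (sq_nonneg x) hb hbc

theorem exp_neg_sq_div_le_one (x : ℝ) {b : ℝ} (hb : 0 ≤ b) : Real.exp (-x ^ 2 / b) ≤ 1 :=
  Real.exp_le_one_iff.2 (div_nonpos_of_nonpos_of_nonneg (neg_nonpos.2 (sq_nonneg x)) hb)

theorem one_div_one_add_mem_Icc {v : ℝ} (hv : 0 ≤ v) : 1 / (1 + v) ∈ Icc (0 : ℝ) 1 :=
  ⟨by positivity, (div_le_one (by positivity)).2 (by linarith)⟩

theorem integrableOn_Ioi_rpow_mul_exp_neg_div {s d : ℝ} (hs : 0 < s) (hd : 0 < d) :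
    IntegrableOn (fun u : ℝ => u ^ (-s - 1) * Real.exp (-(d / u))) (Ioi 0) := by
  have gamma : IntegrableOn (fun y : ℝ => y ^ (s - 1) * Real.exp (-d * y)) (Ioi 0) := by
    simpa only [Real.rpow_one] using
      integrableOn_rpow_mul_exp_neg_mul_rpow (s := s - 1) (p := 1) (by linarith) one_pos hd
  have inverse := (integrableOn_Ioi_comp_rpow_iff' _ (neg_ne_zero.2 one_ne_zero)).2 gamma
  refine inverse.congr_fun (fun u (hu : 0 < u) => ?_) measurableSet_Ioi
  simp only [smul_eq_mul]
  rw [← Real.rpow_mul hu.le, ← mul_assoc, ← Real.rpow_add hu, Real.rpow_neg_one]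
  ring_nf

theorem integrableOn_Ioi_rpow_mul_one_add_rpow {a : ℝ} (ha : 0 < a) (ha' : a < 1) :
    IntegrableOn (fun v : ℝ => v ^ (-a) * (1 + v) ^ (-(3 : ℝ) / 2)) (Ioi 0) := by
  have hmeas : Measurable fun v : ℝ => v ^ (-a) * (1 + v) ^ (-(3 : ℝ) / 2) := by fun_prop
  rw [← Ioc_union_Ioi_eq_Ioi (zero_le_one (α := ℝ))]
  refine IntegrableOn.union ?near_zero ?tail
  case near_zero =>
    have hpow : IntegrableOn (fun v : ℝ => v ^ (-a)) (Ioc 0 1) :=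
      (intervalIntegrable_iff_integrableOn_Ioc_of_le zero_le_one).1
        (intervalIntegral.intervalIntegrable_rpow' (by linarith))
    refine hpow.mono' hmeas.aestronglyMeasurable (ae_restrict_of_forall_mem measurableSet_Ioc ?_)
    rintro v ⟨hv, -⟩
    rw [Real.norm_of_nonneg (by positivity)]
    exact mul_le_of_le_one_right (by positivity)
      (Real.rpow_le_one_of_one_le_of_nonpos (by linarith) (by norm_num))
  case tail =>
    have hpow : IntegrableOn (fun v : ℝ => v ^ (-(3 : ℝ) / 2)) (Ioi 1) :=
      integrableOn_Ioi_rpow_of_lt (by norm_num) one_pos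
    refine hpow.mono' hmeas.aestronglyMeasurable (ae_restrict_of_forall_mem measurableSet_Ioi ?_)
    intro v (hv : 1 < v)
    have hv0 : 0 < v := by linarith
    rw [Real.norm_of_nonneg (by positivity)]
    calc v ^ (-a) * (1 + v) ^ (-(3 : ℝ) / 2)
        ≤ 1 * v ^ (-(3 : ℝ) / 2) := by
          gcongr ?_ * ?_
          · exact Real.rpow_le_one_of_one_le_of_nonpos hv.le (by linarith)
          · exact Real.rpow_le_rpow_of_nonpos hv0 (by linarith) (by norm_num)
      _ = v ^ (-(3 : ℝ) / 2) := one_mul _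

end Elementary

/-- The posterior weight for `L = 1` and `τ = 1`, as a function of `v = λ²`. All estimates on
`wt` are reduced to this weight by the substitution `v = t τ²` together with the bounds on `L`. -/
def baseWt (a x v : ℝ) : ℝ :=
  (1 + v) ^ (-(1 : ℝ) / 2) * v ^ (-a - 1) * Real.exp (-x ^ 2 / (2 * (1 + v)))

/-- The second moment of `N(x(1 - κ), 1 - κ)`, the law of `θ` given the observation `x` and the
shrinkage coefficient `κ`. -/
def condSecondMoment (x κ : ℝ) : ℝ := (1 - κ) + x ^ 2 * (1 - κ) ^ 2

section BaseWeight

variable {a x v : ℝ}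

theorem baseWt_pos (hv : 0 < v) : 0 < baseWt a x v := by
  unfold baseWt; positivity

theorem measurable_baseWt : Measurable (baseWt a x) := by
  unfold baseWt; fun_prop

theorem baseWt_le_rpow (hv : 0 < v) : baseWt a x v ≤ v ^ (-a - 1) := by
  have hexp : Real.exp (-x ^ 2 / (2 * (1 + v))) ≤ 1 := exp_neg_sq_div_le_one x (by positivity)
  have hrpow : (1 + v) ^ (-(1 : ℝ) / 2) ≤ 1 :=
    Real.rpow_le_one_of_one_le_of_nonpos (by linarith) (by norm_num)
  calc baseWt a x v ≤ 1 * v ^ (-a - 1) * 1 := by unfold baseWt; gcongr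
    _ = v ^ (-a - 1) := by ring

theorem integrableOn_Ioi_baseWt (ha : 0 < a) {s : ℝ} (hs : 0 < s) :
    IntegrableOn (baseWt a x) (Ioi s) := by
  refine (integrableOn_Ioi_rpow_of_lt (a := -a - 1) (by linarith) hs).mono'
    measurable_baseWt.aestronglyMeasurable (ae_restrict_of_forall_mem measurableSet_Ioi ?_)
  intro v (hv : s < v)
  rw [Real.norm_of_nonneg (baseWt_pos (hs.trans hv)).le]
  exact baseWt_le_rpow (hs.trans hv)

theorem hasDerivAt_exp_neg_sq_div (hv : 0 ≤ v) :
    HasDerivAt (fun v : ℝ => Real.exp (-x ^ 2 / (2 * (1 + v))))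
      (Real.exp (-x ^ 2 / (2 * (1 + v))) * (x ^ 2 / (2 * (1 + v) ^ 2))) v := by
  have hden : HasDerivAt (fun v : ℝ => 2 * (1 + v)) (2 * 1) v :=
    ((hasDerivAt_id v).const_add 1).const_mul 2
  refine ((hasDerivAt_const v (-x ^ 2)).fun_div hden (by positivity)).exp.congr_deriv ?_
  field_simp
  ring

theorem tendsto_exp_neg_sq_div_atTop :
    Tendsto (fun v : ℝ => Real.exp (-x ^ 2 / (2 * (1 + v)))) atTop (𝓝 1) := by
  rw [← Real.exp_zero]
  refine (Real.continuous_exp.tendsto 0).comp (tendsto_const_nhds.div_atTop ?_)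
  exact (tendsto_atTop_add_const_left _ _ tendsto_id).const_mul_atTop two_pos

theorem hasDerivAt_baseWt (hv : 0 < v) :
    HasDerivAt (baseWt a x)
      (baseWt a x v * (x ^ 2 / (2 * (1 + v) ^ 2) - (a + 1) / v - 1 / (2 * (1 + v)))) v := by
  have hv1 : 0 < 1 + v := by linarith
  have hone_add : HasDerivAt (fun v : ℝ => (1 + v) ^ (-(1 : ℝ) / 2))
      (1 * (-(1 : ℝ) / 2) * (1 + v) ^ (-(1 : ℝ) / 2 - 1)) v :=
    ((hasDerivAt_id v).const_add 1).rpow_const (Or.inl hv1.ne')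
  have hpow : HasDerivAt (fun v : ℝ => v ^ (-a - 1)) ((-a - 1) * v ^ (-a - 1 - 1)) v :=
    Real.hasDerivAt_rpow_const (Or.inl hv.ne')
  refine ((hone_add.fun_mul hpow).fun_mul
    (hasDerivAt_exp_neg_sq_div hv.le)).congr_deriv ?_
  rw [Real.rpow_sub_one hv1.ne', Real.rpow_sub_one hv.ne' (-a - 1), baseWt]
  field_simp
  ring

theorem one_sub_one_div_one_add (hv : 0 < v) : 1 - 1 / (1 + v) = v / (1 + v) := by
  field_simp
  ring

theorem one_sub_mul_baseWt_le (hv : 0 < v) :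
    (1 - 1 / (1 + v)) * baseWt a x v ≤ v ^ (-a) * (1 + v) ^ (-(3 : ℝ) / 2) := by
  have hv1 : 0 < 1 + v := by linarith
  have hpow : (1 + v) ^ (-(3 : ℝ) / 2) = (1 + v) ^ (-(1 : ℝ) / 2) / (1 + v) := by
    rw [← Real.rpow_sub_one hv1.ne']; norm_num
  have hexp : Real.exp (-x ^ 2 / (2 * (1 + v))) ≤ 1 := exp_neg_sq_div_le_one x (by positivity)
  calc (1 - 1 / (1 + v)) * baseWt a x v
      = v ^ (-a) * (1 + v) ^ (-(3 : ℝ) / 2) * Real.exp (-x ^ 2 / (2 * (1 + v))) := by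
        rw [one_sub_one_div_one_add hv, hpow, baseWt, Real.rpow_sub_one hv.ne']
        field_simp
    _ ≤ v ^ (-a) * (1 + v) ^ (-(3 : ℝ) / 2) := mul_le_of_le_one_right (by positivity) hexp

theorem sq_mul_one_sub_sq_mul_baseWt_le (ha : 1 / 2 ≤ a) (ha' : a ≤ 1) (hv : 0 < v) :
    x ^ 2 * (1 - 1 / (1 + v)) ^ 2 * baseWt a x v ≤
      2 * (Real.exp (-x ^ 2 / (2 * (1 + v))) * (x ^ 2 / (2 * (1 + v) ^ 2))) := by
  have hv1 : 0 < 1 + v := by linarith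
  have hpow : v ^ 2 * v ^ (-a - 1) * (1 + v) ^ (-(1 : ℝ) / 2) ≤ 1 :=
    calc v ^ 2 * v ^ (-a - 1) * (1 + v) ^ (-(1 : ℝ) / 2)
        = v ^ (1 - a) * (1 + v) ^ (-(1 : ℝ) / 2) := by
          rw [← Real.rpow_natCast, ← Real.rpow_add hv]; push_cast; ring_nf
      _ ≤ (1 + v) ^ (1 - a) * (1 + v) ^ (-(1 : ℝ) / 2) := by
          gcongr ?_ * _
          exact Real.rpow_le_rpow hv.le (by linarith) (by linarith)
      _ = (1 + v) ^ (1 / 2 - a) := by rw [← Real.rpow_add hv1]; ring_nf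
      _ ≤ 1 := Real.rpow_le_one_of_one_le_of_nonpos (by linarith) (by linarith)
  calc x ^ 2 * (1 - 1 / (1 + v)) ^ 2 * baseWt a x v
      = v ^ 2 * v ^ (-a - 1) * (1 + v) ^ (-(1 : ℝ) / 2) *
          (2 * (Real.exp (-x ^ 2 / (2 * (1 + v))) * (x ^ 2 / (2 * (1 + v) ^ 2)))) := by
        rw [one_sub_one_div_one_add hv, baseWt]
        field_simp
    _ ≤ _ := mul_le_of_le_one_left (by positivity) hpow

theorem integral_condSecondMoment_mul_baseWt_le (ha : 1 / 2 ≤ a) (ha' : a < 1) :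
    IntegrableOn (fun v => condSecondMoment x (1 / (1 + v)) * baseWt a x v) (Ioi 0) ∧
      ∫ v in Ioi 0, condSecondMoment x (1 / (1 + v)) * baseWt a x v ≤
        (∫ v in Ioi (0 : ℝ), v ^ (-a) * (1 + v) ^ (-(3 : ℝ) / 2)) + 2 := by
  have hderiv : ∀ v ∈ Ici (0 : ℝ), HasDerivAt _ _ v := fun v hv =>
    hasDerivAt_exp_neg_sq_div (x := x) hv
  have hderiv_nonneg : ∀ v ∈ Ioi (0 : ℝ),
      0 ≤ Real.exp (-x ^ 2 / (2 * (1 + v))) * (x ^ 2 / (2 * (1 + v) ^ 2)) :=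
    fun v _ => by positivity
  have hint_deriv :=
    integrableOn_Ioi_deriv_of_nonneg' hderiv hderiv_nonneg tendsto_exp_neg_sq_div_atTop
  have hintegral_deriv :=
    integral_Ioi_of_hasDerivAt_of_nonneg' hderiv hderiv_nonneg tendsto_exp_neg_sq_div_atTop
  have hint_power := integrableOn_Ioi_rpow_mul_one_add_rpow (a := a) (by linarith) ha'
  have hint := hint_power.add (hint_deriv.const_mul 2)
  have hle : ∀ v ∈ Ioi (0 : ℝ), condSecondMoment x (1 / (1 + v)) * baseWt a x v ≤
      v ^ (-a) * (1 + v) ^ (-(3 : ℝ) / 2) +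
        2 * (Real.exp (-x ^ 2 / (2 * (1 + v))) * (x ^ 2 / (2 * (1 + v) ^ 2))) := fun v hv => by
    rw [condSecondMoment, add_mul]
    exact add_le_add (one_sub_mul_baseWt_le hv) (sq_mul_one_sub_sq_mul_baseWt_le ha ha'.le hv)
  have hnonneg : ∀ v ∈ Ioi (0 : ℝ), 0 ≤ condSecondMoment x (1 / (1 + v)) * baseWt a x v :=
    fun v (hv : 0 < v) => by
      have := sub_nonneg.2 (one_div_one_add_mem_Icc hv.le).2
      exact mul_nonneg (by unfold condSecondMoment; positivity) (baseWt_pos hv).le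
  refine ⟨hint.mono' ?_ (ae_restrict_of_forall_mem measurableSet_Ioi fun v hv => ?_), ?_⟩
  · have := measurable_baseWt (a := a) (x := x)
    exact Measurable.aestronglyMeasurable (by unfold condSecondMoment; fun_prop)
  · exact (Real.norm_of_nonneg (hnonneg v hv)).trans_le (hle v hv)
  · refine (integral_mono_of_nonneg (ae_restrict_of_forall_mem measurableSet_Ioi hnonneg) hint
      (ae_restrict_of_forall_mem measurableSet_Ioi hle)).trans ?_
    simp only [Pi.add_apply]
    rw [integral_add hint_power (hint_deriv.const_mul 2), integral_const_mul, hintegral_deriv]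
    linarith [Real.exp_pos (-x ^ 2 / (2 * (1 + 0)))]

theorem tendsto_one_add_mul_baseWt_atTop (ha : 0 < a) :
    Tendsto (fun v => (1 + v) * baseWt a x v) atTop (𝓝 0) := by
  refine squeeze_zero' (g := fun v => 2 * v ^ (-a)) ?_ ?_ ?_
  · filter_upwards [eventually_gt_atTop 0] with v hv
    exact mul_nonneg (by linarith) (baseWt_pos hv).le
  · filter_upwards [eventually_ge_atTop 1] with v hv
    have hv0 : 0 < v := by linarith
    calc (1 + v) * baseWt a x v ≤ (2 * v) * v ^ (-a - 1) := by
          gcongr ?_ * ?_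
          · exact (baseWt_pos hv0).le
          · linarith
          · exact baseWt_le_rpow hv0
      _ = 2 * v ^ (-a) := by rw [Real.rpow_sub_one hv0.ne']; field_simp
  · simpa only [mul_zero] using (tendsto_rpow_neg_atTop ha).const_mul 2

theorem integrableOn_Ioi_mul_baseWt (ha : 0 < a) {s : ℝ} (hs : 0 < s) {f : ℝ → ℝ}
    (hf : Measurable f) {C : ℝ} (hC : ∀ v ∈ Ioi s, |f v| ≤ C) :
    IntegrableOn (fun v => f v * baseWt a x v) (Ioi s) :=
  (integrableOn_Ioi_baseWt ha hs).bdd_mul hf.aestronglyMeasurable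
    (ae_restrict_of_forall_mem measurableSet_Ioi hC)

-- Integrating the derivative of `(1 + v) * baseWt a x v`, which is at least
-- `(x² κ / 2 - 2 (a + 1)) * baseWt a x v` for `v ≥ 1`.
theorem sq_mul_integral_one_div_mul_baseWt_le (ha : 0 < a) :
    x ^ 2 * ∫ v in Ioi 1, 1 / (1 + v) * baseWt a x v ≤
      4 * (a + 1) * ∫ v in Ioi 1, baseWt a x v := by
  have hderiv : ∀ v ∈ Ici (1 : ℝ), HasDerivAt (fun v => (1 + v) * baseWt a x v)
      (x ^ 2 / 2 * (1 / (1 + v) * baseWt a x v) -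
        ((a + 1) * (1 + v) / v - 1 / 2) * baseWt a x v) v := fun v (hv : 1 ≤ v) => by
    have hv0 : 0 < v := by linarith
    refine (((hasDerivAt_id v).const_add 1).mul (hasDerivAt_baseWt hv0)).congr_deriv ?_
    simp only [id_eq]
    field_simp
    ring
  have hκ_int : IntegrableOn (fun v => 1 / (1 + v) * baseWt a x v) (Ioi 1) :=
    integrableOn_Ioi_mul_baseWt ha one_pos (by fun_prop) (C := 1) fun v (hv : 1 < v) => by
      obtain ⟨h0, h1⟩ := one_div_one_add_mem_Icc (v := v) (by linarith)
      rwa [abs_of_nonneg h0]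
  have hcoef : ∀ v ∈ Ioi (1 : ℝ), 0 ≤ (a + 1) * (1 + v) / v - 1 / 2 ∧
      (a + 1) * (1 + v) / v - 1 / 2 ≤ 2 * (a + 1) := fun v (hv : 1 < v) => by
    have hv0 : 0 < v := by linarith
    rw [sub_nonneg, sub_le_iff_le_add, le_div_iff₀ hv0, div_le_iff₀ hv0]
    constructor <;> nlinarith
  have hcoef_int : IntegrableOn (fun v => ((a + 1) * (1 + v) / v - 1 / 2) * baseWt a x v) (Ioi 1) :=
    integrableOn_Ioi_mul_baseWt ha one_pos (by fun_prop) fun v hv =>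
      (abs_of_nonneg (hcoef v hv).1).trans_le (hcoef v hv).2
  have hftc := integral_Ioi_of_hasDerivAt_of_tendsto' hderiv
    ((hκ_int.const_mul _).sub hcoef_int) (tendsto_one_add_mul_baseWt_atTop ha)
  rw [integral_sub (hκ_int.const_mul _) hcoef_int, integral_const_mul] at hftc
  have hcoef_le : ∫ v in Ioi 1, ((a + 1) * (1 + v) / v - 1 / 2) * baseWt a x v ≤
      2 * (a + 1) * ∫ v in Ioi 1, baseWt a x v := by
    rw [← integral_const_mul]
    refine setIntegral_mono_on hcoef_int ((integrableOn_Ioi_baseWt ha one_pos).const_mul _)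
      measurableSet_Ioi fun v (hv : 1 < v) => ?_
    exact mul_le_mul_of_nonneg_right (hcoef v hv).2 (baseWt_pos (by linarith)).le
  have hboundary : 0 < (1 + 1) * baseWt a x 1 := mul_pos (by norm_num) (baseWt_pos one_pos)
  linarith

theorem mul_exp_le_integral_baseWt (ha : 0 < a) :
    5 ^ (-(1 : ℝ) / 2) * 4 ^ (-a - 1) * Real.exp (-x ^ 2 / 8) ≤ ∫ v in Ioi 1, baseWt a x v := by
  set c : ℝ := 5 ^ (-(1 : ℝ) / 2) * 4 ^ (-a - 1) * Real.exp (-x ^ 2 / 8)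
  have hsub : Ioc (3 : ℝ) 4 ⊆ Ioi 1 := fun v hv => mem_Ioi.2 (by linarith [hv.1])
  have hint := integrableOn_Ioi_baseWt (x := x) ha one_pos
  have hle : ∀ v ∈ Ioc (3 : ℝ) 4, c ≤ baseWt a x v := by
    rintro v ⟨hv3, hv4⟩
    unfold c baseWt
    gcongr ?_ * ?_ * ?_
    · exact Real.rpow_le_rpow_of_nonpos (by linarith) (by linarith) (by norm_num)
    · exact Real.rpow_le_rpow_of_nonpos (by linarith) hv4 (by linarith)
    · exact exp_neg_sq_div_le_exp_neg_sq_div x (by norm_num) (by linarith)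
  calc c = ∫ _ in Ioc (3 : ℝ) 4, c := by
        rw [setIntegral_const, Real.volume_real_Ioc_of_le (by norm_num)]; norm_num
    _ ≤ ∫ v in Ioc 3 4, baseWt a x v :=
        setIntegral_mono_on (integrableOn_const (by simp)) (hint.mono_set hsub)
          measurableSet_Ioc hle
    _ ≤ ∫ v in Ioi 1, baseWt a x v :=
        setIntegral_mono_set hint (ae_restrict_of_forall_mem measurableSet_Ioi
          fun v (hv : 1 < v) => (baseWt_pos (by linarith)).le) hsub.eventuallyLE

end BaseWeight

section Weight

/-- The unnormalized prior density of the local variance `t = λ²`. -/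
def Prior.varDensity (P : Prior) (t : ℝ) : ℝ := t ^ (-P.a - 1) * P.L t

/-- The prior on the local variance has finite mass. A `Prior` need not be proper, since `L` is not
controlled near `0`; when it is not, the normalizing integral of the posterior is `0` by
convention. -/
def Prior.IsProper (P : Prior) : Prop := IntegrableOn P.varDensity (Ioi 0)

variable {P : Prior} {x τ t : ℝ}

theorem Prior.varDensity_pos (ht : 0 < t) : 0 < P.varDensity t :=
  mul_pos (Real.rpow_pos_of_pos ht _) (P.L_pos t ht)

theorem Prior.measurable_varDensity : Measurable P.varDensity := by
  have := P.L_meas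
  unfold varDensity; fun_prop

theorem Prior.varDensity_le (ht : 0 < t) : P.varDensity t ≤ P.M * t ^ (-P.a - 1) := by
  rw [mul_comm P.M]
  exact mul_le_mul_of_nonneg_left (P.L_le t ht) (by positivity)

theorem wt_eq_mul_varDensity : wt P x τ t =
    (1 + t * τ ^ 2) ^ (-(1 : ℝ) / 2) * Real.exp (-x ^ 2 / (2 * (1 + t * τ ^ 2))) *
      P.varDensity t := by
  unfold wt Prior.varDensity; ring

theorem measurable_wt : Measurable (wt P x τ) := by
  have := P.L_meas
  unfold wt; fun_prop

theorem wt_pos (ht : 0 < t) : 0 < wt P x τ t := by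
  have := P.varDensity_pos ht
  rw [wt_eq_mul_varDensity]; positivity

theorem wt_nonneg_ae_restrict {s : ℝ} (hs : 0 ≤ s) :
    0 ≤ᵐ[volume.restrict (Ioi s)] wt P x τ :=
  ae_restrict_of_forall_mem measurableSet_Ioi fun _ ht => (wt_pos (hs.trans_lt ht)).le

theorem exp_mul_varDensity_le_wt (ht : t ∈ Ioc (0 : ℝ) 1) :
    (1 + τ ^ 2) ^ (-(1 : ℝ) / 2) * Real.exp (-x ^ 2 / 2) * P.varDensity t ≤ wt P x τ t := by
  obtain ⟨ht0, ht1⟩ := ht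
  have := (P.varDensity_pos ht0).le
  have hv : 0 ≤ t * τ ^ 2 := by positivity
  rw [wt_eq_mul_varDensity]
  gcongr ?_ * ?_ * _
  · exact Real.rpow_le_rpow_of_nonpos (by positivity) (by nlinarith [sq_nonneg τ]) (by norm_num)
  · exact exp_neg_sq_div_le_exp_neg_sq_div x two_pos (by linarith)

theorem wt_le_exp_mul_varDensity (ht : 0 < t) {b : ℝ} (hb : 2 * (1 + t * τ ^ 2) ≤ b) :
    wt P x τ t ≤ Real.exp (-x ^ 2 / b) * P.varDensity t := by
  have hv : 0 ≤ t * τ ^ 2 := by positivity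
  have := (P.varDensity_pos ht).le
  rw [wt_eq_mul_varDensity]
  gcongr ?_ * _
  calc (1 + t * τ ^ 2) ^ (-(1 : ℝ) / 2) * Real.exp (-x ^ 2 / (2 * (1 + t * τ ^ 2)))
      ≤ 1 * Real.exp (-x ^ 2 / b) := by
        gcongr ?_ * ?_
        · exact Real.rpow_le_one_of_one_le_of_nonpos (by linarith) (by norm_num)
        · exact exp_neg_sq_div_le_exp_neg_sq_div x (by positivity) hb
    _ = Real.exp (-x ^ 2 / b) := one_mul _

theorem wt_le_varDensity (ht : 0 < t) : wt P x τ t ≤ P.varDensity t :=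
  (wt_le_exp_mul_varDensity ht le_rfl).trans
    (mul_le_of_le_one_left (P.varDensity_pos ht).le (exp_neg_sq_div_le_one x (by positivity)))

theorem integrableOn_wt_iff : IntegrableOn (wt P x τ) (Ioi 0) ↔ P.IsProper := by
  constructor
  · intro hwt
    rw [Prior.IsProper, ← Ioc_union_Ioi_eq_Ioi (zero_le_one (α := ℝ))]
    refine IntegrableOn.union ?near_zero ?tail
    case near_zero =>
      set c := (1 + τ ^ 2) ^ (-(1 : ℝ) / 2) * Real.exp (-x ^ 2 / 2)
      have hc : 0 < c := by positivity
      refine ((hwt.mono_set Ioc_subset_Ioi_self).const_mul c⁻¹).mono'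
        P.measurable_varDensity.aestronglyMeasurable
        (ae_restrict_of_forall_mem measurableSet_Ioc fun t ht => ?_)
      rw [Real.norm_of_nonneg (P.varDensity_pos ht.1).le, ← div_eq_inv_mul, le_div_iff₀' hc]
      exact exp_mul_varDensity_le_wt ht
    case tail =>
      refine ((integrableOn_Ioi_rpow_of_lt (a := -P.a - 1) (by linarith [P.a_pos])
        one_pos).const_mul P.M).mono' P.measurable_varDensity.aestronglyMeasurable
        (ae_restrict_of_forall_mem measurableSet_Ioi fun t (ht : 1 < t) => ?_)
      have ht0 : 0 < t := by linarith
      rw [Real.norm_of_nonneg (P.varDensity_pos ht0).le]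
      exact P.varDensity_le ht0
  · intro hP
    refine Integrable.mono' hP measurable_wt.aestronglyMeasurable
      (ae_restrict_of_forall_mem measurableSet_Ioi fun t ht => ?_)
    rw [Real.norm_of_nonneg (wt_pos ht).le]
    exact wt_le_varDensity ht

theorem integrableOn_comp_mul_wt (hP : P.IsProper) {g : ℝ → ℝ} (hg : Continuous g) :
    IntegrableOn (fun t => g (1 / (1 + t * τ ^ 2)) * wt P x τ t) (Ioi 0) := by
  obtain ⟨C, hC⟩ := (isCompact_Icc (a := (0 : ℝ)) (b := 1)).exists_bound_of_continuousOn
    hg.continuousOn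
  refine (integrableOn_wt_iff.2 hP).bdd_mul (c := C)
    (hg.measurable.comp (by fun_prop)).aestronglyMeasurable
    (ae_restrict_of_forall_mem measurableSet_Ioi fun t (ht : 0 < t) => hC _ ?_)
  exact one_div_one_add_mem_Icc (by positivity)

theorem setIntegral_wt_le (hP : P.IsProper) {s : Set ℝ} (hs : s ⊆ Ioi 0) :
    ∫ t in s, wt P x τ t ≤ ∫ t in Ioi 0, wt P x τ t :=
  setIntegral_mono_set (integrableOn_wt_iff.2 hP) (wt_nonneg_ae_restrict le_rfl) hs.eventuallyLE

theorem integral_wt_pos (hP : P.IsProper) : 0 < ∫ t in Ioi 0, wt P x τ t := by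
  rw [setIntegral_pos_iff_support_of_nonneg_ae (wt_nonneg_ae_restrict le_rfl)
    (integrableOn_wt_iff.2 hP)]
  have hsupp : Function.support (wt P x τ) ∩ Ioi 0 = Ioi 0 :=
    inter_eq_right.2 fun t ht => (wt_pos ht).ne'
  simp [hsupp]

theorem exp_mul_integral_varDensity_le (hP : P.IsProper) (hτ : τ ^ 2 ≤ 1) :
    2 ^ (-(1 : ℝ) / 2) * Real.exp (-x ^ 2 / 2) * ∫ t in Ioc 0 1, P.varDensity t ≤
      ∫ t in Ioi 0, wt P x τ t := by
  have hwt := (integrableOn_wt_iff (x := x) (τ := τ)).2 hP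
  rw [← integral_const_mul]
  refine (setIntegral_mono_on ?_ (hwt.mono_set Ioc_subset_Ioi_self) measurableSet_Ioc
    fun t ht => ?_).trans (setIntegral_wt_le hP Ioc_subset_Ioi_self)
  · exact (IntegrableOn.mono_set hP Ioc_subset_Ioi_self).const_mul _
  · refine le_trans ?_ (exp_mul_varDensity_le_wt ht)
    have := (P.varDensity_pos ht.1).le
    gcongr ?_ * _ * _
    exact Real.rpow_le_rpow_of_nonpos (by positivity) (by linarith) (by norm_num)

theorem Prior.IsProper.integral_varDensity_pos (hP : P.IsProper) :
    0 < ∫ t in Ioc 0 1, P.varDensity t := by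
  rw [setIntegral_pos_iff_support_of_nonneg_ae
    (ae_restrict_of_forall_mem measurableSet_Ioc fun t ht => (P.varDensity_pos ht.1).le)
    (IntegrableOn.mono_set hP Ioc_subset_Ioi_self)]
  have hsupp : Function.support P.varDensity ∩ Ioc 0 1 = Ioc 0 1 :=
    inter_eq_right.2 fun t ht => (P.varDensity_pos ht.1).ne'
  simp [hsupp]

theorem wt_eq_mul_baseWt (hτ : 0 < τ) (ht : 0 < t) :
    wt P x τ t = τ ^ (2 * P.a) * (τ ^ 2 * (P.L t * baseWt P.a x (t * τ ^ 2))) := by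
  have hscale : t ^ (-P.a - 1) = τ ^ (2 * P.a) * τ ^ 2 * (t * τ ^ 2) ^ (-P.a - 1) := by
    rw [Real.mul_rpow ht.le (by positivity), ← Real.rpow_natCast τ 2, ← Real.rpow_mul hτ.le,
      mul_left_comm, ← Real.rpow_add hτ, ← Real.rpow_add hτ]
    simp [show 2 * P.a + 2 + 2 * (-P.a - 1) = 0 by ring]
  rw [wt, hscale, baseWt]
  ring

theorem setIntegral_mul_wt_le (hτ : 0 < τ) {s : ℝ} (hs : 0 ≤ s) {f : ℝ → ℝ}
    (hf : ∀ v ∈ Ioi s, 0 ≤ f v) (hint : IntegrableOn (fun v => f v * baseWt P.a x v) (Ioi s)) :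
    ∫ t in Ioi (s / τ ^ 2), f (t * τ ^ 2) * wt P x τ t ≤
      P.M * τ ^ (2 * P.a) * ∫ v in Ioi s, f v * baseWt P.a x v := by
  have hτ2 : 0 < τ ^ 2 := by positivity
  have hs' : s / τ ^ 2 * τ ^ 2 = s := by field_simp
  have hsubst := integral_comp_mul_right_Ioi (fun v => f v * baseWt P.a x v) (s / τ ^ 2) hτ2
  rw [hs', smul_eq_mul, eq_inv_mul_iff_mul_eq₀ hτ2.ne'] at hsubst
  have hint' := (integrableOn_Ioi_comp_mul_right_iff
    (fun v => f v * baseWt P.a x v) (s / τ ^ 2) hτ2).2 (by rwa [hs'])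
  rw [← hsubst, ← mul_assoc, ← integral_const_mul]
  have hmem : ∀ t ∈ Ioi (s / τ ^ 2), 0 < t ∧ 0 ≤ f (t * τ ^ 2) ∧ 0 < t * τ ^ 2 := fun t ht => by
    have ht0 : 0 < t := (div_nonneg hs hτ2.le).trans_lt ht
    exact ⟨ht0, hf _ ((div_lt_iff₀ hτ2).1 ht), mul_pos ht0 hτ2⟩
  refine integral_mono_of_nonneg (ae_restrict_of_forall_mem measurableSet_Ioi fun t ht => ?_)
    (hint'.const_mul _) (ae_restrict_of_forall_mem measurableSet_Ioi fun t ht => ?_)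
  · exact mul_nonneg (hmem t ht).2.1 (wt_pos (hmem t ht).1).le
  · obtain ⟨ht0, hft, hv⟩ := hmem t ht
    have := (baseWt_pos (a := P.a) (x := x) hv).le
    calc f (t * τ ^ 2) * wt P x τ t
        = P.L t * (τ ^ (2 * P.a) * τ ^ 2 * (f (t * τ ^ 2) * baseWt P.a x (t * τ ^ 2))) := by
          rw [wt_eq_mul_baseWt hτ ht0]; ring
      _ ≤ P.M * (τ ^ (2 * P.a) * τ ^ 2 * (f (t * τ ^ 2) * baseWt P.a x (t * τ ^ 2))) := by
          gcongr; exact P.L_le t ht0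
      _ = _ := by ring

theorem mul_integral_baseWt_le_integral_wt (hP : P.IsProper) (hτ : 0 < τ)
    (hτ₀ : P.t₀ * τ ^ 2 ≤ 1) :
    P.c₀ * τ ^ (2 * P.a) * ∫ v in Ioi 1, baseWt P.a x v ≤ ∫ t in Ioi 0, wt P x τ t := by
  have hτ2 : 0 < τ ^ 2 := by positivity
  have hsubst := integral_comp_mul_right_Ioi (baseWt P.a x) (1 / τ ^ 2) hτ2
  rw [one_div_mul_cancel hτ2.ne', smul_eq_mul, eq_inv_mul_iff_mul_eq₀ hτ2.ne'] at hsubst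
  have hint := (integrableOn_Ioi_comp_mul_right_iff (baseWt P.a x) (1 / τ ^ 2) hτ2).2
    (by rw [one_div_mul_cancel hτ2.ne']; exact integrableOn_Ioi_baseWt P.a_pos one_pos)
  have hsub : Ioi (1 / τ ^ 2) ⊆ Ioi 0 := Ioi_subset_Ioi (by positivity)
  rw [← hsubst, ← mul_assoc, ← integral_const_mul]
  refine (setIntegral_mono_on (hint.const_mul _) ((integrableOn_wt_iff.2 hP).mono_set hsub)
    measurableSet_Ioi fun t ht => ?_).trans (setIntegral_wt_le hP hsub)
  have ht0 : 0 < t := hsub ht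
  have hL : P.c₀ ≤ P.L t := P.L_ge t
    (((le_div_iff₀ hτ2).2 hτ₀).trans (le_of_lt ht))
  have := (baseWt_pos (a := P.a) (x := x) (mul_pos ht0 hτ2)).le
  calc P.c₀ * τ ^ (2 * P.a) * τ ^ 2 * baseWt P.a x (t * τ ^ 2)
      = τ ^ (2 * P.a) * (τ ^ 2 * (P.c₀ * baseWt P.a x (t * τ ^ 2))) := by ring
    _ ≤ τ ^ (2 * P.a) * (τ ^ 2 * (P.L t * baseWt P.a x (t * τ ^ 2))) := by gcongr
    _ = wt P x τ t := (wt_eq_mul_baseWt hτ ht0).symm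

end Weight

section ShrinkageCoefficient

variable {P : Prior} {x τ : ℝ}

theorem postExp_mono (hP : P.IsProper) {f g : ℝ → ℝ} (hf : Continuous f) (hg : Continuous g)
    (hfg : ∀ κ ∈ Icc (0 : ℝ) 1, f κ ≤ g κ) : postExp P f x τ ≤ postExp P g x τ := by
  refine div_le_div_of_nonneg_right (setIntegral_mono_on (integrableOn_comp_mul_wt hP hf)
    (integrableOn_comp_mul_wt hP hg) measurableSet_Ioi fun t (ht : 0 < t) => ?_)
    (integral_wt_pos hP).le
  exact mul_le_mul_of_nonneg_right (hfg _ (one_div_one_add_mem_Icc (by positivity))) (wt_pos ht).le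

theorem postExp_const_mul (c : ℝ) (g : ℝ → ℝ) :
    postExp P (fun κ => c * g κ) x τ = c * postExp P g x τ := by
  simp only [postExp, mul_assoc, integral_const_mul, mul_div_assoc]

theorem postExp_const (hP : P.IsProper) (c : ℝ) : postExp P (fun _ => c) x τ = c := by
  rw [postExp, integral_const_mul]
  exact mul_div_cancel_right₀ c (integral_wt_pos hP).ne'

theorem postExp_sub (hP : P.IsProper) {f g : ℝ → ℝ} (hf : Continuous f) (hg : Continuous g) :
    postExp P (fun κ => f κ - g κ) x τ = postExp P f x τ - postExp P g x τ := by
  simp only [postExp, sub_mul]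
  rw [integral_sub (integrableOn_comp_mul_wt hP hf) (integrableOn_comp_mul_wt hP hg), sub_div]

theorem postExp_id_mem_Icc (hP : P.IsProper) : postExp P (fun κ => κ) x τ ∈ Icc (0 : ℝ) 1 :=
  ⟨(postExp_const hP 0).ge.trans (postExp_mono hP continuous_const continuous_id fun _ h => h.1),
    (postExp_mono hP continuous_id continuous_const fun _ h => h.2).trans (postExp_const hP 1).le⟩

theorem continuous_condSecondMoment : Continuous (condSecondMoment x) := by
  unfold condSecondMoment; fun_prop

theorem postExp_condSecondMoment_le_mul_one_sub (hP : P.IsProper) :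
    postExp P (condSecondMoment x) x τ ≤ (1 + x ^ 2) * (1 - postExp P (fun κ => κ) x τ) := by
  calc postExp P (condSecondMoment x) x τ
      ≤ postExp P (fun κ => (1 + x ^ 2) * (1 - κ)) x τ := by
        refine postExp_mono hP continuous_condSecondMoment (by fun_prop) ?_
        rintro κ ⟨hκ0, hκ1⟩
        unfold condSecondMoment
        nlinarith [mul_nonneg (sq_nonneg x) (mul_nonneg (sub_nonneg.2 hκ1) hκ0)]
    _ = (1 + x ^ 2) * (1 - postExp P (fun κ => κ) x τ) := by
        rw [postExp_const_mul _ (fun κ => 1 - κ),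
          postExp_sub hP (f := fun _ => 1) (g := fun κ => κ) continuous_const continuous_id,
          postExp_const hP]

theorem exists_postExp_condSecondMoment_le (hP : P.IsProper) (ha : 1 / 2 ≤ P.a) (ha' : P.a < 1) :
    ∃ C > 0, ∀ τ : ℝ, 0 < τ → τ ^ 2 ≤ 1 → ∀ x,
      postExp P (condSecondMoment x) x τ ≤ C * τ ^ (2 * P.a) * Real.exp (x ^ 2 / 2) := by
  set I := ∫ v in Ioi (0 : ℝ), v ^ (-P.a) * (1 + v) ^ (-(3 : ℝ) / 2)
  set m := ∫ t in Ioc 0 1, P.varDensity t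
  have hI : 0 ≤ I := setIntegral_nonneg measurableSet_Ioi fun v (hv : 0 < v) => by positivity
  have hm : 0 < m := hP.integral_varDensity_pos
  have hM := P.M_pos
  refine ⟨P.M * (I + 2) / (2 ^ (-(1 : ℝ) / 2) * m), by positivity, fun τ hτ hτ1 x => ?_⟩
  obtain ⟨hint, hbase⟩ := integral_condSecondMoment_mul_baseWt_le (x := x) ha ha'
  have hnum : ∫ t in Ioi 0, condSecondMoment x (1 / (1 + t * τ ^ 2)) * wt P x τ t ≤
      P.M * τ ^ (2 * P.a) * (I + 2) := by
    have htransfer := setIntegral_mul_wt_le hτ le_rfl (fun v (hv : 0 < v) => ?_) hint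
    · rw [zero_div] at htransfer
      exact htransfer.trans (mul_le_mul_of_nonneg_left hbase (by positivity))
    · have := sub_nonneg.2 (one_div_one_add_mem_Icc hv.le).2
      unfold condSecondMoment; positivity
  have hexp : Real.exp (x ^ 2 / 2) * Real.exp (-x ^ 2 / 2) = 1 := by
    rw [← Real.exp_add, neg_div, add_neg_cancel, Real.exp_zero]
  rw [postExp, div_le_iff₀ (integral_wt_pos hP)]
  calc _ ≤ P.M * τ ^ (2 * P.a) * (I + 2) := hnum
    _ = P.M * τ ^ (2 * P.a) * (I + 2) * (Real.exp (x ^ 2 / 2) * Real.exp (-x ^ 2 / 2)) := by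
        rw [hexp, mul_one]
    _ = P.M * (I + 2) / (2 ^ (-(1 : ℝ) / 2) * m) * τ ^ (2 * P.a) * Real.exp (x ^ 2 / 2) *
          (2 ^ (-(1 : ℝ) / 2) * Real.exp (-x ^ 2 / 2) * m) := by field_simp
    _ ≤ _ := by gcongr; exact exp_mul_integral_varDensity_le hP hτ1

theorem setIntegral_Ioc_mul_wt_le (hP : P.IsProper) (hτ : 0 < τ) :
    ∫ t in Ioc 0 (1 / τ ^ 2), 1 / (1 + t * τ ^ 2) * wt P x τ t ≤
      Real.exp (-x ^ 2 / 4) * ∫ t in Ioi 0, P.varDensity t := by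
  have hint := integrableOn_comp_mul_wt (x := x) (τ := τ) hP continuous_id
  rw [← integral_const_mul]
  refine (setIntegral_mono_on (hint.mono_set Ioc_subset_Ioi_self)
    ((IntegrableOn.mono_set hP Ioc_subset_Ioi_self).const_mul _) measurableSet_Ioc
    fun t ht => ?_).trans (setIntegral_mono_set (Integrable.const_mul hP _) ?_
      Ioc_subset_Ioi_self.eventuallyLE)
  · have hv : t * τ ^ 2 ≤ 1 := (le_div_iff₀ (by positivity)).1 ht.2
    have hκ := one_div_one_add_mem_Icc (mul_nonneg ht.1.le (sq_nonneg τ))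
    exact (mul_le_of_le_one_left (wt_pos ht.1).le hκ.2).trans
      (wt_le_exp_mul_varDensity ht.1 (by linarith))
  · exact ae_restrict_of_forall_mem measurableSet_Ioi fun t ht =>
      mul_nonneg (Real.exp_pos _).le (P.varDensity_pos ht).le

theorem sq_mul_setIntegral_Ioi_mul_wt_le (hP : P.IsProper) (hτ : 0 < τ)
    (hτ₀ : P.t₀ * τ ^ 2 ≤ 1) :
    x ^ 2 * ∫ t in Ioi (1 / τ ^ 2), 1 / (1 + t * τ ^ 2) * wt P x τ t ≤
      4 * (P.a + 1) * P.M / P.c₀ * ∫ t in Ioi 0, wt P x τ t := by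
  have hM := P.M_pos
  have hc := P.c₀_pos
  have ha := P.a_pos
  have hκ : ∀ v ∈ Ioi (1 : ℝ), 1 / (1 + v) ∈ Icc (0 : ℝ) 1 := fun v (hv : 1 < v) =>
    one_div_one_add_mem_Icc (by linarith)
  have hκ_int : IntegrableOn (fun v => 1 / (1 + v) * baseWt P.a x v) (Ioi 1) :=
    integrableOn_Ioi_mul_baseWt ha one_pos (by fun_prop) fun v hv =>
      (abs_of_nonneg (hκ v hv).1).trans_le (hκ v hv).2
  calc x ^ 2 * ∫ t in Ioi (1 / τ ^ 2), 1 / (1 + t * τ ^ 2) * wt P x τ t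
      ≤ x ^ 2 * (P.M * τ ^ (2 * P.a) * ∫ v in Ioi 1, 1 / (1 + v) * baseWt P.a x v) := by
        gcongr
        exact setIntegral_mul_wt_le hτ zero_le_one (fun v hv => (hκ v hv).1) hκ_int
    _ = P.M * τ ^ (2 * P.a) * (x ^ 2 * ∫ v in Ioi 1, 1 / (1 + v) * baseWt P.a x v) := by ring
    _ ≤ P.M * τ ^ (2 * P.a) * (4 * (P.a + 1) * ∫ v in Ioi 1, baseWt P.a x v) :=
        mul_le_mul_of_nonneg_left (sq_mul_integral_one_div_mul_baseWt_le ha) (by positivity)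
    _ = 4 * (P.a + 1) * P.M / P.c₀ *
          (P.c₀ * τ ^ (2 * P.a) * ∫ v in Ioi 1, baseWt P.a x v) := by field_simp
    _ ≤ _ := by gcongr; exact mul_integral_baseWt_le_integral_wt hP hτ hτ₀

theorem sq_mul_integral_mul_wt_le (hP : P.IsProper) (hτ : 0 < τ) (hτ₀ : P.t₀ * τ ^ 2 ≤ 1) :
    x ^ 2 * ∫ t in Ioi 0, 1 / (1 + t * τ ^ 2) * wt P x τ t ≤
      (∫ t in Ioi 0, P.varDensity t) * (x ^ 2 * Real.exp (-x ^ 2 / 4)) +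
        4 * (P.a + 1) * P.M / P.c₀ * ∫ t in Ioi 0, wt P x τ t := by
  have hs : 0 ≤ 1 / τ ^ 2 := by positivity
  have hint : IntegrableOn (fun t => 1 / (1 + t * τ ^ 2) * wt P x τ t) (Ioi 0) :=
    integrableOn_comp_mul_wt hP continuous_id
  have hunion := setIntegral_union (Ioc_disjoint_Ioi le_rfl) measurableSet_Ioi
    (hint.mono_set Ioc_subset_Ioi_self) (hint.mono_set (Ioi_subset_Ioi hs))
  rw [Ioc_union_Ioi_eq_Ioi hs] at hunion
  rw [hunion, mul_add]
  refine add_le_add ?_ (sq_mul_setIntegral_Ioi_mul_wt_le hP hτ hτ₀)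
  exact (mul_le_mul_of_nonneg_left (setIntegral_Ioc_mul_wt_le hP hτ) (sq_nonneg x)).trans_eq
    (by ring)

theorem mul_rpow_mul_exp_le_integral_wt (hP : P.IsProper) (hτ : 0 < τ)
    (hτ₀ : P.t₀ * τ ^ 2 ≤ 1) :
    P.c₀ * (5 ^ (-(1 : ℝ) / 2) * 4 ^ (-P.a - 1)) * (τ ^ (2 * P.a) * Real.exp (-x ^ 2 / 8)) ≤
      ∫ t in Ioi 0, wt P x τ t := by
  have hc := P.c₀_pos
  calc P.c₀ * (5 ^ (-(1 : ℝ) / 2) * 4 ^ (-P.a - 1)) * (τ ^ (2 * P.a) * Real.exp (-x ^ 2 / 8))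
      = P.c₀ * τ ^ (2 * P.a) *
          (5 ^ (-(1 : ℝ) / 2) * 4 ^ (-P.a - 1) * Real.exp (-x ^ 2 / 8)) := by ring
    _ ≤ P.c₀ * τ ^ (2 * P.a) * ∫ v in Ioi 1, baseWt P.a x v :=
        mul_le_mul_of_nonneg_left (mul_exp_le_integral_baseWt P.a_pos) (by positivity)
    _ ≤ _ := mul_integral_baseWt_le_integral_wt hP hτ hτ₀

theorem sq_mul_exp_neg_sq_div_le (x : ℝ) {b : ℝ} (hb : 0 < b) :
    x ^ 2 * Real.exp (-x ^ 2 / b) ≤ b := by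
  have hexp : x ^ 2 / b ≤ Real.exp (x ^ 2 / b) := by linarith [Real.add_one_le_exp (x ^ 2 / b)]
  rw [neg_div, Real.exp_neg, ← div_eq_mul_inv, div_le_iff₀ (Real.exp_pos _)]
  rwa [div_le_iff₀' hb] at hexp

-- The normalizing constant is at least of order `τ^{2a} e^{-x²/8} ≥ e^{-3x²/16}`, which absorbs
-- the factor `e^{-x²/4}` of the local part.
theorem exists_sq_mul_postExp_id_le_of_exp_le (hP : P.IsProper) :
    ∃ C > 0, ∀ τ x : ℝ, 0 < τ → P.t₀ * τ ^ 2 ≤ 1 → Real.exp (-x ^ 2 / 16) ≤ τ ^ (2 * P.a) →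
      x ^ 2 * postExp P (fun κ => κ) x τ ≤ C := by
  set G := ∫ t in Ioi 0, P.varDensity t
  set c := P.c₀ * (5 ^ (-(1 : ℝ) / 2) * 4 ^ (-P.a - 1))
  set C := 4 * (P.a + 1) * P.M / P.c₀
  have hG : 0 ≤ G := setIntegral_nonneg measurableSet_Ioi fun t ht => (P.varDensity_pos ht).le
  have hc : 0 < c := by have := P.c₀_pos; positivity
  have hC : 0 < C := by have := P.c₀_pos; have := P.M_pos; have := P.a_pos; positivity
  refine ⟨16 * G / c + C, by positivity, fun τ x hτ hτ₀ hxτ => ?_⟩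
  have hsplit : Real.exp (-x ^ 2 / 4) =
      Real.exp (-x ^ 2 / 16) * (Real.exp (-x ^ 2 / 16) * Real.exp (-x ^ 2 / 8)) := by
    rw [← Real.exp_add, ← Real.exp_add]; ring_nf
  have hlocal : G * (x ^ 2 * Real.exp (-x ^ 2 / 4)) ≤ 16 * G / c * ∫ t in Ioi 0, wt P x τ t := by
    calc G * (x ^ 2 * Real.exp (-x ^ 2 / 4))
        = G / c * (x ^ 2 * Real.exp (-x ^ 2 / 16)) *
            (c * (Real.exp (-x ^ 2 / 16) * Real.exp (-x ^ 2 / 8))) := by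
          rw [hsplit]; field_simp
      _ ≤ G / c * 16 * (c * (τ ^ (2 * P.a) * Real.exp (-x ^ 2 / 8))) := by
          gcongr; exact sq_mul_exp_neg_sq_div_le x (by norm_num)
      _ ≤ G / c * 16 * ∫ t in Ioi 0, wt P x τ t := by
          gcongr; exact mul_rpow_mul_exp_le_integral_wt hP hτ hτ₀
      _ = 16 * G / c * ∫ t in Ioi 0, wt P x τ t := by ring
  rw [postExp, ← mul_div_assoc, div_le_iff₀ (integral_wt_pos hP), add_mul]
  exact (sq_mul_integral_mul_wt_le hP hτ hτ₀).trans (by gcongr)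

theorem exists_sq_mul_postExp_id_le (hP : P.IsProper) :
    ∃ C > 0, ∀ τ l : ℝ, 0 < τ → P.t₀ * τ ^ 2 ≤ 1 → 1 ≤ l → Real.exp (-l) ≤ τ ^ (2 * P.a) →
      ∀ x, x ^ 2 * postExp P (fun κ => κ) x τ ≤ C * l := by
  obtain ⟨C, hC, hlarge⟩ := exists_sq_mul_postExp_id_le_of_exp_le hP
  refine ⟨16 + C, by positivity, fun τ l hτ hτ₀ hl hlτ x => ?_⟩
  rcases le_or_gt (x ^ 2) (16 * l) with hx | hx
  · have hE := (postExp_id_mem_Icc (x := x) (τ := τ) hP).2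
    calc x ^ 2 * postExp P (fun κ => κ) x τ ≤ 16 * l :=
          (mul_le_of_le_one_right (sq_nonneg x) hE).trans hx
      _ ≤ (16 + C) * l := by gcongr; linarith
  · have hxτ : Real.exp (-x ^ 2 / 16) ≤ τ ^ (2 * P.a) :=
      (Real.exp_le_exp.2 (by linarith)).trans hlτ
    nlinarith [hlarge τ x hτ hτ₀ hxτ]

end ShrinkageCoefficient

section GaussianMixture

open ProbabilityTheory

variable {P : Prior} {x τ t : ℝ}

/-- The unnormalized joint posterior density of the mean `θ` and the local variance `t = λ²`. -/
def joint (P : Prior) (τ x θ t : ℝ) : ℝ :=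
  Real.exp (-(x - θ) ^ 2 / 2) *
    ((Real.sqrt (2 * Real.pi * t * τ ^ 2))⁻¹ * Real.exp (-θ ^ 2 / (2 * t * τ ^ 2)) *
      (P.K * t ^ (-P.a - 1) * P.L t))

/-- The posterior law of `θ` given the observation `x` and the shrinkage coefficient `κ`. -/
def condLaw (x κ : ℝ) : Measure ℝ := gaussianReal (x * (1 - κ)) (1 - κ).toNNReal

instance (x κ : ℝ) : IsProbabilityMeasure (condLaw x κ) := by
  unfold condLaw; infer_instance

theorem measurable_joint : Measurable fun z : ℝ × ℝ => joint P τ x z.1 z.2 := by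
  have := P.L_meas
  unfold joint; fun_prop

theorem joint_nonneg (θ : ℝ) (ht : 0 < t) : 0 ≤ joint P τ x θ t := by
  have := P.L_pos t ht
  have := P.K_pos
  unfold joint; positivity

theorem postw_eq_integral_joint (θ : ℝ) : postw P τ x θ = ∫ t in Ioi 0, joint P τ x θ t := by
  unfold postw pdens joint
  rw [integral_const_mul]

theorem postw_nonneg (θ : ℝ) : 0 ≤ postw P τ x θ := by
  rw [postw_eq_integral_joint]
  exact setIntegral_nonneg measurableSet_Ioi fun t ht => joint_nonneg θ ht

theorem exp_mul_exp_eq_complete_square {v : ℝ} (hv : 0 < v) (x θ : ℝ) :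
    Real.exp (-(x - θ) ^ 2 / 2) * Real.exp (-θ ^ 2 / (2 * v)) =
      Real.exp (-x ^ 2 / (2 * (1 + v))) *
        Real.exp (-(θ - x * (v / (1 + v))) ^ 2 / (2 * (v / (1 + v)))) := by
  rw [← Real.exp_add, ← Real.exp_add]
  congr 1
  field_simp
  ring

theorem joint_eq_mul_gaussianPDFReal (hτ : 0 < τ) (ht : 0 < t) (θ : ℝ) :
    joint P τ x θ t = P.K * wt P x τ t *
      gaussianPDFReal (x * (1 - 1 / (1 + t * τ ^ 2))) (1 - 1 / (1 + t * τ ^ 2)).toNNReal θ := by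
  have hv : 0 < t * τ ^ 2 := by positivity
  rw [one_sub_one_div_one_add hv]
  unfold joint gaussianPDFReal wt
  rw [Real.coe_toNNReal _ (by positivity), mul_assoc (2 * Real.pi), mul_assoc 2 t]
  generalize t * τ ^ 2 = v at hv
  have hsqrt : (Real.sqrt (2 * Real.pi * v))⁻¹ =
      (1 + v) ^ (-(1 : ℝ) / 2) * (Real.sqrt (2 * Real.pi * (v / (1 + v))))⁻¹ := by
    rw [neg_div, Real.rpow_neg (by linarith), ← Real.sqrt_eq_rpow, ← mul_inv,
      ← Real.sqrt_mul (by linarith)]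
    congr 2
    field_simp
  calc _ = Real.exp (-(x - θ) ^ 2 / 2) * Real.exp (-θ ^ 2 / (2 * v)) *
        (Real.sqrt (2 * Real.pi * v))⁻¹ * (P.K * t ^ (-P.a - 1) * P.L t) := by ring
    _ = _ := by rw [hsqrt, exp_mul_exp_eq_complete_square hv]; ring

theorem toNNReal_one_sub_one_div_one_add_ne_zero (hτ : 0 < τ) (ht : 0 < t) :
    (1 - 1 / (1 + t * τ ^ 2)).toNNReal ≠ 0 := by
  have hv : 0 < t * τ ^ 2 := by positivity
  rw [one_sub_one_div_one_add hv, ne_eq, Real.toNNReal_eq_zero, not_le]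
  positivity

theorem integral_mul_joint (hτ : 0 < τ) (ht : 0 < t) (f : ℝ → ℝ) :
    ∫ θ, f θ * joint P τ x θ t =
      P.K * ((∫ θ, f θ ∂condLaw x (1 / (1 + t * τ ^ 2))) * wt P x τ t) := by
  rw [condLaw, integral_gaussianReal_eq_integral_smul
    (toNNReal_one_sub_one_div_one_add_ne_zero hτ ht), mul_comm (integral _ _), ← mul_assoc,
    ← integral_const_mul]
  refine integral_congr_ae (Eventually.of_forall fun θ => ?_)
  simp only [joint_eq_mul_gaussianPDFReal hτ ht, smul_eq_mul]
  ring

theorem integrable_mul_joint (hτ : 0 < τ) (ht : 0 < t) {f : ℝ → ℝ}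
    (hf : Integrable f (condLaw x (1 / (1 + t * τ ^ 2)))) :
    Integrable fun θ => f θ * joint P τ x θ t := by
  rw [condLaw, gaussianReal_of_var_ne_zero _ (toNNReal_one_sub_one_div_one_add_ne_zero hτ ht),
    integrable_withDensity_iff_integrable_smul' (measurable_gaussianPDF _ _)
      (by simp [gaussianPDF])] at hf
  refine (hf.const_mul (P.K * wt P x τ t)).congr (Eventually.of_forall fun θ => ?_)
  simp only [joint_eq_mul_gaussianPDFReal hτ ht, toReal_gaussianPDF, smul_eq_mul]
  ring

theorem memLp_id_condLaw (x κ : ℝ) : MemLp id 2 (condLaw x κ) :=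
  memLp_id_gaussianReal' 2 (by norm_num)

theorem integral_id_condLaw (x κ : ℝ) : ∫ θ, θ ∂condLaw x κ = x * (1 - κ) :=
  integral_id_gaussianReal

theorem integral_sq_condLaw (x : ℝ) {κ : ℝ} (hκ : κ ≤ 1) :
    ∫ θ, θ ^ 2 ∂condLaw x κ = condSecondMoment x κ := by
  have hvar := variance_eq_sub (memLp_id_condLaw x κ)
  simp only [condLaw, variance_id_gaussianReal, Real.coe_toNNReal _ (sub_nonneg.2 hκ), Pi.pow_apply,
    id_eq, integral_id_gaussianReal] at hvar
  rw [condLaw, condSecondMoment]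
  linarith

theorem integrable_sq_condLaw (x κ : ℝ) : Integrable (fun θ => θ ^ 2) (condLaw x κ) :=
  (memLp_id_condLaw x κ).integrable_sq

theorem integral_one_add_sq_condLaw (x : ℝ) {κ : ℝ} (hκ : κ ≤ 1) :
    ∫ θ, 1 + θ ^ 2 ∂condLaw x κ = 1 + condSecondMoment x κ := by
  rw [integral_add (integrable_const 1) (integrable_sq_condLaw x κ), integral_sq_condLaw x hκ]
  simp

theorem integrable_prod_one_add_sq_mul_joint (hP : P.IsProper) (hτ : 0 < τ) :
    Integrable (fun z : ℝ × ℝ => (1 + z.1 ^ 2) * joint P τ x z.1 z.2)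
      ((volume : Measure ℝ).prod (volume.restrict (Ioi 0))) := by
  have hmeas : Measurable fun z : ℝ × ℝ => (1 + z.1 ^ 2) * joint P τ x z.1 z.2 := by
    have := measurable_joint (P := P) (τ := τ) (x := x)
    fun_prop
  rw [integrable_prod_iff' hmeas.aestronglyMeasurable]
  refine ⟨ae_restrict_of_forall_mem measurableSet_Ioi fun t ht =>
    integrable_mul_joint hτ ht ((integrable_const 1).add (integrable_sq_condLaw x _)), ?_⟩
  have hcont : Continuous fun κ => 1 + condSecondMoment x κ :=
    continuous_const.add continuous_condSecondMoment
  refine ((integrableOn_comp_mul_wt (x := x) (τ := τ) hP hcont).const_mul P.K).congr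
    (ae_restrict_of_forall_mem measurableSet_Ioi fun t (ht : 0 < t) => ?_)
  have hκ := one_div_one_add_mem_Icc (v := t * τ ^ 2) (by positivity)
  have hnorm : ∀ θ, ‖(1 + θ ^ 2) * joint P τ x θ t‖ = (1 + θ ^ 2) * joint P τ x θ t := fun θ =>
    Real.norm_of_nonneg (mul_nonneg (by positivity) (joint_nonneg θ ht))
  simp only [hnorm, integral_mul_joint hτ ht, integral_one_add_sq_condLaw x hκ.2]

section QuadraticGrowth

variable {f : ℝ → ℝ} {C : ℝ}

theorem integrable_prod_mul_joint (hP : P.IsProper) (hτ : 0 < τ) (hf : Measurable f)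
    (hfC : ∀ θ, |f θ| ≤ C * (1 + θ ^ 2)) :
    Integrable (fun z : ℝ × ℝ => f z.1 * joint P τ x z.1 z.2)
      ((volume : Measure ℝ).prod (volume.restrict (Ioi 0))) := by
  have hmeas : Measurable fun z : ℝ × ℝ => f z.1 * joint P τ x z.1 z.2 :=
    (hf.comp measurable_fst).mul measurable_joint
  refine ((integrable_prod_one_add_sq_mul_joint (x := x) hP hτ).const_mul C).mono
    hmeas.aestronglyMeasurable (Eventually.of_forall fun z => ?_)
  rw [← mul_assoc, norm_mul, norm_mul _ (joint _ _ _ _ _)]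
  exact mul_le_mul_of_nonneg_right ((hfC z.1).trans (le_abs_self _)) (norm_nonneg _)

theorem mul_postw_eq_integral_mul_joint (f : ℝ → ℝ) (θ : ℝ) :
    f θ * postw P τ x θ = ∫ t in Ioi 0, f θ * joint P τ x θ t := by
  rw [integral_const_mul, postw_eq_integral_joint]

theorem integrable_mul_postw (hP : P.IsProper) (hτ : 0 < τ) (hf : Measurable f)
    (hfC : ∀ θ, |f θ| ≤ C * (1 + θ ^ 2)) : Integrable fun θ => f θ * postw P τ x θ := by
  simp only [mul_postw_eq_integral_mul_joint f]
  exact (integrable_prod_mul_joint hP hτ hf hfC).integral_prod_left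

theorem integral_mul_postw (hP : P.IsProper) (hτ : 0 < τ) (hf : Measurable f)
    (hfC : ∀ θ, |f θ| ≤ C * (1 + θ ^ 2)) :
    ∫ θ, f θ * postw P τ x θ = P.K * ∫ t in Ioi 0,
      (∫ θ, f θ ∂condLaw x (1 / (1 + t * τ ^ 2))) * wt P x τ t := by
  simp only [mul_postw_eq_integral_mul_joint f]
  rw [integral_integral_swap (integrable_prod_mul_joint hP hτ hf hfC), ← integral_const_mul]
  exact setIntegral_congr_fun measurableSet_Ioi fun t ht => integral_mul_joint hτ ht f

end QuadraticGrowth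

theorem abs_pow_le_one_add_sq {k : ℕ} (hk : k ≤ 2) (θ : ℝ) : |θ ^ k| ≤ 1 * (1 + θ ^ 2) := by
  rw [abs_pow, one_mul, ← sq_abs θ]
  interval_cases k <;> nlinarith [sq_nonneg (|θ| - 1)]

theorem integrable_pow_mul_postw (hP : P.IsProper) (hτ : 0 < τ) {k : ℕ} (hk : k ≤ 2) :
    Integrable fun θ => θ ^ k * postw P τ x θ :=
  integrable_mul_postw hP hτ (by fun_prop) (abs_pow_le_one_add_sq hk)

theorem integral_pow_mul_postw (hP : P.IsProper) (hτ : 0 < τ) {k : ℕ} (hk : k ≤ 2) {g : ℝ → ℝ}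
    (hg : ∀ κ ≤ 1, ∫ θ, θ ^ k ∂condLaw x κ = g κ) :
    ∫ θ, θ ^ k * postw P τ x θ =
      P.K * ∫ t in Ioi 0, g (1 / (1 + t * τ ^ 2)) * wt P x τ t := by
  rw [integral_mul_postw hP hτ (by fun_prop) (abs_pow_le_one_add_sq hk)]
  congr 1
  refine setIntegral_congr_fun measurableSet_Ioi fun t (ht : 0 < t) => ?_
  simp only [hg _ (one_div_one_add_mem_Icc (v := t * τ ^ 2) (by positivity)).2]

theorem integrable_postw (hP : P.IsProper) (hτ : 0 < τ) : Integrable (postw P τ x) := by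
  simpa using integrable_pow_mul_postw (x := x) hP hτ zero_le_two

theorem integral_postw (hP : P.IsProper) (hτ : 0 < τ) :
    ∫ θ, postw P τ x θ = P.K * ∫ t in Ioi 0, wt P x τ t := by
  simpa using integral_pow_mul_postw (x := x) hP hτ zero_le_two (g := fun _ => 1) (by simp)

theorem integral_postw_pos (hP : P.IsProper) (hτ : 0 < τ) : 0 < ∫ θ, postw P τ x θ := by
  rw [integral_postw hP hτ]
  exact mul_pos P.K_pos (integral_wt_pos hP)

theorem postMoment_eq_postExp (hP : P.IsProper) (hτ : 0 < τ) {k : ℕ} (hk : k ≤ 2) {g : ℝ → ℝ}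
    (hg : ∀ κ ≤ 1, ∫ θ, θ ^ k ∂condLaw x κ = g κ) : postMoment P τ x k = postExp P g x τ := by
  rw [postMoment, integral_pow_mul_postw hP hτ hk hg, integral_postw hP hτ,
    mul_div_mul_left _ _ P.K_pos.ne', postExp]

theorem postMoment_one (hP : P.IsProper) (hτ : 0 < τ) : postMoment P τ x 1 = T P τ x := by
  rw [postMoment_eq_postExp hP hτ one_le_two
    fun κ _ => by simp only [pow_one]; exact integral_id_condLaw x κ]
  rw [postExp_const_mul x fun κ => 1 - κ,
    postExp_sub hP (f := fun _ => 1) (g := fun κ => κ) continuous_const continuous_id,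
    postExp_const hP, T]

theorem postMoment_two (hP : P.IsProper) (hτ : 0 < τ) :
    postMoment P τ x 2 = postExp P (condSecondMoment x) x τ :=
  postMoment_eq_postExp hP hτ le_rfl fun _ hκ => integral_sq_condLaw x hκ

theorem integrable_sq_sub_mul_postw (hP : P.IsProper) (hτ : 0 < τ) (c : ℝ) :
    Integrable fun θ => (θ - c) ^ 2 * postw P τ x θ := by
  refine integrable_mul_postw (C := 2 + 2 * c ^ 2) hP hτ (by fun_prop) fun θ => ?_
  rw [abs_of_nonneg (sq_nonneg _)]
  nlinarith [sq_nonneg (θ + c), sq_nonneg (c * θ)]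

theorem integral_sq_sub_T_mul_postw (hP : P.IsProper) (hτ : 0 < τ) :
    (∫ θ, (θ - T P τ x) ^ 2 * postw P τ x θ) / (∫ θ, postw P τ x θ) = postVar P τ x := by
  have hint1 : Integrable fun θ => 2 * T P τ x * (θ ^ 1 * postw P τ x θ) :=
    (integrable_pow_mul_postw hP hτ one_le_two).const_mul _
  have hint2 : Integrable fun θ => θ ^ 2 * postw P τ x θ := integrable_pow_mul_postw hP hτ le_rfl
  have hint21 : Integrable fun θ =>
      θ ^ 2 * postw P τ x θ - 2 * T P τ x * (θ ^ 1 * postw P τ x θ) := hint2.sub hint1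
  have hpos := (integral_postw_pos (x := x) hP hτ).ne'
  have hexpand : ∀ θ, (θ - T P τ x) ^ 2 * postw P τ x θ = θ ^ 2 * postw P τ x θ -
      2 * T P τ x * (θ ^ 1 * postw P τ x θ) + T P τ x ^ 2 * postw P τ x θ := fun θ => by ring
  simp only [hexpand]
  rw [integral_add hint21 ((integrable_postw hP hτ).const_mul _), integral_sub hint2 hint1,
    integral_const_mul, integral_const_mul, postVar, ← postMoment_one hP hτ, postMoment, postMoment]
  field_simp
  ring

theorem exists_postVar_le_rpow_mul_exp (hP : P.IsProper) (ha : 1 / 2 ≤ P.a) (ha' : P.a < 1) :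
    ∃ C > 0, ∀ τ : ℝ, 0 < τ → τ ^ 2 ≤ 1 → ∀ x,
      postVar P τ x ≤ C * τ ^ (2 * P.a) * Real.exp (x ^ 2 / 2) := by
  obtain ⟨C, hC, hmoment⟩ := exists_postExp_condSecondMoment_le hP ha ha'
  refine ⟨C, hC, fun τ hτ hτ1 x => le_trans ?_ (hmoment τ hτ hτ1 x)⟩
  rw [postVar, postMoment_two hP hτ]
  exact sub_le_self _ (sq_nonneg _)

theorem exists_postVar_le_mul (hP : P.IsProper) :
    ∃ C > 0, ∀ τ l : ℝ, 0 < τ → P.t₀ * τ ^ 2 ≤ 1 → 1 ≤ l → Real.exp (-l) ≤ τ ^ (2 * P.a) →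
      ∀ x, postVar P τ x ≤ C * l := by
  obtain ⟨C, hC, hshrink⟩ := exists_sq_mul_postExp_id_le hP
  refine ⟨1 + C, by positivity, fun τ l hτ hτ₀ hl hlτ x => ?_⟩
  have hmoment := postExp_condSecondMoment_le_mul_one_sub (x := x) (τ := τ) hP
  have hκ := postExp_id_mem_Icc (x := x) (τ := τ) hP
  have hx := hshrink τ l hτ hτ₀ hl hlτ x
  rw [postVar, postMoment_two hP hτ, postMoment_one hP hτ, T]
  set κ := postExp P (fun κ => κ) x τ
  calc _ ≤ (1 + x ^ 2) * (1 - κ) - (x * (1 - κ)) ^ 2 := by gcongr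
    _ = 1 - κ + (1 - κ) * (x ^ 2 * κ) := by ring
    _ ≤ 1 + 1 * (C * l) := by
        have := sub_nonneg.2 hκ.2
        gcongr <;> first | linarith [hκ.1] | exact mul_nonneg (sq_nonneg x) hκ.1
    _ ≤ (1 + C) * l := by linarith

theorem joint_le_mul_rpow_mul_exp (ht : 0 < t) (θ : ℝ) :
    joint P τ x θ t ≤ (Real.sqrt (2 * Real.pi * τ ^ 2))⁻¹ * P.K * P.M *
      (t ^ (-(P.a + 1 / 2) - 1) * Real.exp (-(θ ^ 2 / (2 * τ ^ 2) / t))) := by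
  have hsqrt : (Real.sqrt (2 * Real.pi * t * τ ^ 2))⁻¹ =
      (Real.sqrt (2 * Real.pi * τ ^ 2))⁻¹ * t ^ (-(1 / 2 : ℝ)) := by
    rw [mul_right_comm, Real.sqrt_mul (by positivity), mul_inv, Real.rpow_neg ht.le,
      Real.sqrt_eq_rpow t]
  have hexp : -θ ^ 2 / (2 * t * τ ^ 2) = -(θ ^ 2 / (2 * τ ^ 2) / t) := by
    rw [neg_div, div_div, mul_right_comm]
  have hpow : t ^ (-(P.a + 1 / 2) - 1) = t ^ (-(1 / 2 : ℝ)) * t ^ (-P.a - 1) := by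
    rw [← Real.rpow_add ht]; ring_nf
  have := P.K_pos
  have := (P.L_pos t ht).le
  rw [joint, hsqrt, hexp, hpow]
  calc _ ≤ 1 * ((Real.sqrt (2 * Real.pi * τ ^ 2))⁻¹ * t ^ (-(1 / 2 : ℝ)) *
        Real.exp (-(θ ^ 2 / (2 * τ ^ 2) / t)) * (P.K * t ^ (-P.a - 1) * P.M)) := by
        gcongr
        · exact exp_neg_sq_div_le_one _ two_pos.le
        · exact P.L_le t ht
    _ = _ := by ring

theorem integrableOn_joint (hτ : 0 < τ) {θ : ℝ} (hθ : θ ≠ 0) :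
    IntegrableOn (joint P τ x θ) (Ioi 0) := by
  have hs : 0 < P.a + 1 / 2 := add_pos P.a_pos one_half_pos
  have hd : 0 < θ ^ 2 / (2 * τ ^ 2) := by positivity
  have hmeas : Measurable (joint P τ x θ) := by
    have := P.L_meas
    unfold joint; fun_prop
  refine Integrable.mono' ((integrableOn_Ioi_rpow_mul_exp_neg_div hs hd).const_mul
    ((Real.sqrt (2 * Real.pi * τ ^ 2))⁻¹ * P.K * P.M)) hmeas.aestronglyMeasurable
    (ae_restrict_of_forall_mem measurableSet_Ioi fun t (ht : 0 < t) => ?_)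
  exact (Real.norm_of_nonneg (joint_nonneg θ ht)).trans_le (joint_le_mul_rpow_mul_exp ht θ)

theorem isProper_of_integrable_postw (hτ : 0 < τ) (hpost : Integrable (postw P τ x)) :
    P.IsProper := by
  have hprod : Integrable (fun z : ℝ × ℝ => joint P τ x z.1 z.2)
      ((volume : Measure ℝ).prod (volume.restrict (Ioi 0))) := by
    rw [integrable_prod_iff measurable_joint.aestronglyMeasurable]
    refine ⟨?_, hpost.congr (Eventually.of_forall fun θ => ?_)⟩
    · filter_upwards [Measure.ae_ne volume 0] with θ hθ
      exact integrableOn_joint hτ hθ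
    · simp only [postw_eq_integral_joint]
      exact setIntegral_congr_fun measurableSet_Ioi fun t ht =>
        (Real.norm_of_nonneg (joint_nonneg θ ht)).symm
  have hwt : IntegrableOn (fun t => P.K * wt P x τ t) (Ioi 0) := by
    refine hprod.integral_prod_right.congr
      (ae_restrict_of_forall_mem measurableSet_Ioi fun t ht => ?_)
    simpa using integral_mul_joint (P := P) (x := x) hτ ht fun _ => 1
  exact integrableOn_wt_iff.1 ((integrable_const_mul_iff P.K_pos.ne'.isUnit _).1 hwt)

end GaussianMixture

section ProductWeight

variable {ι : Type*} [Fintype ι] {E : ι → Type*}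

theorem prod_update_mul {R : Type*} [CommMonoid R] [DecidableEq ι] (c : R) (v : ι → R) (i : ι) :
    ∏ j, Function.update v i (c * v i) j = c * ∏ j, v j := by
  rw [Finset.prod_update_of_mem (Finset.mem_univ i), mul_assoc,
    ← Finset.prod_eq_mul_prod_sdiff_singleton_of_mem (Finset.mem_univ i)]

theorem comp_eval_mul_prod_eq_prod_update [DecidableEq ι] (w : ∀ i, E i → ℝ) (i : ι) (g : E i → ℝ)
    (x : ∀ i, E i) :
    g (x i) * ∏ j, w j (x j) = ∏ j, Function.update w i (fun y => g y * w i y) j (x j) := by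
  rw [← prod_update_mul _ _ i]
  exact Finset.prod_congr rfl fun j _ =>
    (Function.apply_update (fun k (φ : E k → ℝ) => φ (x k)) w i (fun y => g y * w i y) j).symm

variable [∀ i, MeasurableSpace (E i)] {μ : ∀ i, Measure (E i)} [∀ i, SigmaFinite (μ i)]
  {w h : ∀ i, E i → ℝ} {f : (∀ i, E i) → ℝ}

theorem integrable_comp_eval_mul_prod (hw : ∀ i, Integrable (w i) (μ i)) {i : ι} {g : E i → ℝ}
    (hg : Integrable (fun y => g y * w i y) (μ i)) :
    Integrable (fun x => g (x i) * ∏ j, w j (x j)) (Measure.pi μ) := by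
  classical
  simp only [comp_eval_mul_prod_eq_prod_update]
  refine Integrable.fintype_prod_dep fun j => ?_
  rcases eq_or_ne j i with rfl | hj
  · rwa [Function.update_self]
  · rw [Function.update_of_ne hj]
    exact hw j

theorem integral_comp_eval_mul_prod {i : ι} (hi : ∫ y, w i y ∂μ i ≠ 0) (g : E i → ℝ) :
    ∫ x, g (x i) * ∏ j, w j (x j) ∂Measure.pi μ =
      (∫ y, g y * w i y ∂μ i) / (∫ y, w i y ∂μ i) * ∏ j, ∫ y, w j y ∂μ j := by
  classical
  simp only [comp_eval_mul_prod_eq_prod_update]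
  rw [integral_fintype_prod_eq_prod, ← prod_update_mul _ _ i, div_mul_cancel₀ _ hi]
  exact Finset.prod_congr rfl fun j _ =>
    Function.apply_update (fun k (φ : E k → ℝ) => ∫ y, φ y ∂μ k) w i _ j

theorem integral_mul_prod_le (hw : ∀ i y, 0 ≤ w i y) (hpos : ∀ i, 0 < ∫ y, w i y ∂μ i)
    (hh : ∀ i, Integrable (fun y => h i y * w i y) (μ i)) (hf : ∀ x, 0 ≤ f x)
    (hfh : ∀ x, f x ≤ ∑ i, h i (x i)) :
    ∫ x, f x * ∏ i, w i (x i) ∂Measure.pi μ ≤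
      (∑ i, (∫ y, h i y * w i y ∂μ i) / ∫ y, w i y ∂μ i) * ∏ i, ∫ y, w i y ∂μ i := by
  have hprod : ∀ x : ∀ i, E i, 0 ≤ ∏ i, w i (x i) := fun x =>
    Finset.prod_nonneg fun i _ => hw i _
  have hint : ∀ i, Integrable (fun x => h i (x i) * ∏ j, w j (x j)) (Measure.pi μ) := fun i =>
    integrable_comp_eval_mul_prod
      (fun j => not_imp_comm.1 integral_undef (hpos j).ne') (hh i)
  calc ∫ x, f x * ∏ i, w i (x i) ∂Measure.pi μ
      ≤ ∫ x, ∑ i, h i (x i) * ∏ j, w j (x j) ∂Measure.pi μ := by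
        refine integral_mono_of_nonneg (Eventually.of_forall fun x => mul_nonneg (hf x) (hprod x))
          (integrable_finsetSum _ fun i _ => hint i) (Eventually.of_forall fun x => ?_)
        simp only [← Finset.sum_mul]
        exact mul_le_mul_of_nonneg_right (hfh x) (hprod x)
    _ = _ := by
        rw [integral_finsetSum _ fun i _ => hint i, Finset.sum_mul]
        exact Finset.sum_congr rfl fun i _ => integral_comp_eval_mul_prod (hpos i).ne' _

end ProductWeight

section PosteriorProbability

variable {P : Prior} {τ : ℝ} {n : ℕ}

theorem postProb_nonneg (x : Fin n → ℝ) (A : Set (Fin n → ℝ)) : 0 ≤ postProb P τ x A :=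
  have hprod : ∀ θ : Fin n → ℝ, 0 ≤ ∏ i, postw P τ (x i) (θ i) := fun _ =>
    Finset.prod_nonneg fun _ _ => postw_nonneg _
  div_nonneg (integral_nonneg hprod) (integral_nonneg hprod)

theorem postProb_eq_zero_of_not_isProper (hP : ¬P.IsProper) (hτ : 0 < τ) (hn : 0 < n)
    (x : Fin n → ℝ) (A : Set (Fin n → ℝ)) : postProb P τ x A = 0 := by
  rw [postProb, integral_fintype_prod_volume_eq_prod fun i => postw P τ (x i),
    Finset.prod_eq_zero (Finset.mem_univ (⟨0, hn⟩ : Fin n)), div_zero]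
  exact integral_undef fun hpost => hP (isProper_of_integrable_postw hτ hpost)

theorem postProb_le_of_indicator_le (hP : P.IsProper) (hτ : 0 < τ) (x : Fin n → ℝ)
    {A : Set (Fin n → ℝ)} (hA : MeasurableSet A) {h : Fin n → ℝ → ℝ}
    (hh : ∀ i, Integrable fun t => h i t * postw P τ (x i) t)
    (hAh : ∀ θ, A.indicator 1 θ ≤ ∑ i, h i (θ i)) :
    postProb P τ x A ≤ ∑ i, (∫ t, h i t * postw P τ (x i) t) / ∫ t, postw P τ (x i) t := by
  have hpos : ∀ i, 0 < ∫ t, postw P τ (x i) t := fun i => integral_postw_pos hP hτ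
  rw [postProb, integral_fintype_prod_volume_eq_prod fun i => postw P τ (x i),
    div_le_iff₀ (Finset.prod_pos fun i _ => hpos i), ← integral_indicator hA]
  refine le_of_eq_of_le ?_ (integral_mul_prod_le (fun i => postw_nonneg) hpos hh
    (fun θ => indicator_nonneg (fun _ _ => zero_le_one) θ) hAh)
  refine integral_congr_ae (Eventually.of_forall fun θ => ?_)
  by_cases hθ : θ ∈ A <;> simp [hθ]

theorem postProb_lt_sum_sq_le (hP : P.IsProper) (hτ : 0 < τ) (x : Fin n → ℝ) {R : ℝ}
    (hR : 0 < R) :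
    postProb P τ x {θ | R < ∑ i, (θ i - T P τ (x i)) ^ 2} ≤ ∑ i, postVar P τ (x i) / R := by
  have hA : MeasurableSet {θ : Fin n → ℝ | R < ∑ i, (θ i - T P τ (x i)) ^ 2} :=
    measurableSet_lt measurable_const (by fun_prop)
  refine (postProb_le_of_indicator_le hP hτ x hA (h := fun i t => (t - T P τ (x i)) ^ 2 / R)
    (fun i => ?_) fun θ => ?_).trans_eq (Finset.sum_congr rfl fun i _ => ?_)
  · simp only [div_mul_eq_mul_div]
    exact (integrable_sq_sub_mul_postw hP hτ _).div_const R
  · rw [← Finset.sum_div]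
    refine indicator_apply_le' (fun hθ => ?_) fun _ => ?_
    · exact (one_le_div₀ hR).2 (le_of_lt hθ)
    · exact div_nonneg (Finset.sum_nonneg fun i _ => sq_nonneg _) hR.le
  · simp only [div_mul_eq_mul_div, integral_div]
    rw [div_right_comm, integral_sq_sub_T_mul_postw hP hτ]

end PosteriorProbability

section DataExpectation

theorem gauss_nonneg (z : ℝ) : 0 ≤ gauss z := by
  unfold gauss; positivity

theorem gauss_le (z : ℝ) : gauss z ≤ Real.exp (-z ^ 2 / 2) := by
  refine mul_le_of_le_one_left (Real.exp_pos _).le (inv_le_one_of_one_le₀ ?_)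
  rw [Real.one_le_sqrt]
  linarith [Real.pi_gt_three]

theorem gauss_sub_eq_gaussianPDFReal (θ y : ℝ) :
    gauss (y - θ) = ProbabilityTheory.gaussianPDFReal θ 1 y := by
  simp [gauss, ProbabilityTheory.gaussianPDFReal]

theorem integrable_gauss_sub (θ : ℝ) : Integrable fun y => gauss (y - θ) := by
  simp only [gauss_sub_eq_gaussianPDFReal]
  exact ProbabilityTheory.integrable_gaussianPDFReal θ 1

theorem integral_gauss_sub (θ : ℝ) : ∫ y, gauss (y - θ) = 1 := by
  simp only [gauss_sub_eq_gaussianPDFReal]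
  exact ProbabilityTheory.integral_gaussianPDFReal_eq_one θ one_ne_zero

theorem EN_le_sum_E1 {n : ℕ} {θ : Fin n → ℝ} {f : (Fin n → ℝ) → ℝ} {h : Fin n → ℝ → ℝ}
    (hh : ∀ i, Integrable fun y => h i y * gauss (y - θ i)) (hf : ∀ x, 0 ≤ f x)
    (hfh : ∀ x, f x ≤ ∑ i, h i (x i)) : EN n θ f ≤ ∑ i, E1 (θ i) (h i) := by
  have hone : ∀ i, ∫ y, gauss (y - θ i) = 1 := fun i => integral_gauss_sub (θ i)
  have hle := integral_mul_prod_le (w := fun i y => gauss (y - θ i)) (fun _ _ => gauss_nonneg _)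
    (fun i => zero_lt_one.trans_eq (hone i).symm) hh hf hfh
  simp only [hone, div_one, Finset.prod_const_one, mul_one] at hle
  exact hle

theorem integrable_mul_gauss_sub {g : ℝ → ℝ} (hg : Measurable g) {c : ℝ} (hgc : ∀ y, |g y| ≤ c)
    (θ : ℝ) : Integrable fun y => g y * gauss (y - θ) :=
  (integrable_gauss_sub θ).bdd_mul hg.aestronglyMeasurable (Eventually.of_forall hgc)

theorem E1_le {g : ℝ → ℝ} (hg : Measurable g) {c : ℝ} (hgc : ∀ y, |g y| ≤ c) (θ : ℝ) :
    E1 θ g ≤ c := by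
  calc E1 θ g ≤ ∫ y, c * gauss (y - θ) :=
        integral_mono (integrable_mul_gauss_sub hg hgc θ) ((integrable_gauss_sub θ).const_mul c)
          fun y => mul_le_mul_of_nonneg_right ((le_abs_self _).trans (hgc y)) (gauss_nonneg _)
    _ = c := by rw [integral_const_mul, integral_gauss_sub, mul_one]

/-- The bound on the posterior variance at `y`, up to a constant: `q e^{y²/2}` for small
observations, truncated at the level `l` that is valid for all of them. -/
def truncatedExp (q l y : ℝ) : ℝ := min (q * Real.exp (y ^ 2 / 2)) l

variable {q l : ℝ}

theorem measurable_truncatedExp : Measurable (truncatedExp q l) := by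
  unfold truncatedExp; fun_prop

theorem abs_truncatedExp_le (hq : 0 ≤ q) (hl : 0 ≤ l) (y : ℝ) : |truncatedExp q l y| ≤ l := by
  rw [truncatedExp, abs_of_nonneg (le_min (by positivity) hl)]
  exact min_le_right _ _

theorem truncatedExp_mul_gauss_le (hq : 0 ≤ q) (hl : 0 ≤ l) (y : ℝ) :
    truncatedExp q l y * gauss y ≤
      (Icc (-(2 * Real.sqrt l)) (2 * Real.sqrt l)).indicator (fun _ => q) y +
        l * Real.exp (-l) * Real.exp (-(1 / 4) * y ^ 2) := by
  by_cases hy : y ∈ Icc (-(2 * Real.sqrt l)) (2 * Real.sqrt l)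
  · rw [indicator_of_mem hy]
    refine le_add_of_le_of_nonneg ?_ (by positivity)
    calc truncatedExp q l y * gauss y
        ≤ q * Real.exp (y ^ 2 / 2) * Real.exp (-y ^ 2 / 2) :=
          mul_le_mul (min_le_left _ _) (gauss_le y) (gauss_nonneg y) (by positivity)
      _ = q := by rw [mul_assoc, ← Real.exp_add, neg_div, add_neg_cancel, Real.exp_zero, mul_one]
  · rw [indicator_of_notMem hy, zero_add]
    have hy2 : 4 * l < y ^ 2 := by
      rw [mem_Icc, ← abs_le, not_le] at hy
      calc 4 * l = (2 * Real.sqrt l) ^ 2 := by rw [mul_pow, Real.sq_sqrt hl]; norm_num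
        _ < y ^ 2 := by rw [← sq_abs y]; gcongr
    calc truncatedExp q l y * gauss y
        ≤ l * Real.exp (-y ^ 2 / 2) :=
          mul_le_mul (min_le_right _ _) (gauss_le y) (gauss_nonneg y) hl
      _ ≤ l * Real.exp (-l + -(1 / 4) * y ^ 2) := by gcongr; linarith
      _ = _ := by rw [Real.exp_add, mul_assoc]

theorem E1_zero_truncatedExp_le (hq : 0 ≤ q) (hl : 0 ≤ l) :
    E1 0 (truncatedExp q l) ≤ 4 * (Real.sqrt l * q + l * Real.exp (-l)) := by
  have hball : Integrable
      ((Icc (-(2 * Real.sqrt l)) (2 * Real.sqrt l)).indicator fun _ : ℝ => q) :=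
    (integrable_indicator_iff measurableSet_Icc).2 (integrableOn_const (by simp))
  have htail : Integrable fun y : ℝ => l * Real.exp (-l) * Real.exp (-(1 / 4) * y ^ 2) :=
    (integrable_exp_neg_mul_sq (by norm_num)).const_mul _
  have hsqrt : Real.sqrt (Real.pi / (1 / 4)) ≤ 4 :=
    Real.sqrt_le_iff.2 ⟨by norm_num, by linarith [Real.pi_le_four]⟩
  calc E1 0 (truncatedExp q l)
      ≤ ∫ y, (Icc (-(2 * Real.sqrt l)) (2 * Real.sqrt l)).indicator (fun _ => q) y +
          l * Real.exp (-l) * Real.exp (-(1 / 4) * y ^ 2) := by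
        refine integral_mono (integrable_mul_gauss_sub measurable_truncatedExp
          (abs_truncatedExp_le hq hl) 0) (hball.add htail) fun y => ?_
        simpa only [sub_zero] using truncatedExp_mul_gauss_le hq hl y
    _ = 4 * Real.sqrt l * q + l * Real.exp (-l) * Real.sqrt (Real.pi / (1 / 4)) := by
        rw [integral_add hball htail, integral_indicator measurableSet_Icc, setIntegral_const,
          integral_const_mul, integral_gaussian, Real.volume_real_Icc_of_le
            (by linarith [Real.sqrt_nonneg l]), smul_eq_mul]
        ring
    _ ≤ 4 * Real.sqrt l * q + l * Real.exp (-l) * 4 := by gcongr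
    _ = _ := by ring

theorem sum_le_of_mem_nearlyBlack {n p : ℕ} {θ : Fin n → ℝ} (hθ : θ ∈ nearlyBlack n p) {A B : ℝ}
    (hA : 0 ≤ A) (hB : 0 ≤ B) {f : Fin n → ℝ} (hfA : ∀ i, f i ≤ A)
    (hfB : ∀ i, θ i = 0 → f i ≤ B) : ∑ i, f i ≤ p * A + n * B := by
  classical
  have hcard : (Finset.univ.filter fun i => θ i ≠ 0).card ≤ p := by
    simp only [nearlyBlack, Set.mem_ofPred_eq] at hθ
    convert hθ
  calc ∑ i, f i ≤ ∑ i, ((if θ i ≠ 0 then A else 0) + B) := by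
        refine Finset.sum_le_sum fun i _ => ?_
        by_cases hi : θ i = 0
        · simpa [hi] using hfB i hi
        · simpa [hi] using le_add_of_le_of_nonneg (hfA i) hB
    _ = (Finset.univ.filter fun i => θ i ≠ 0).card * A + n * B := by
        rw [Finset.sum_add_distrib, ← Finset.sum_filter, Finset.sum_const, Finset.sum_const,
          Finset.card_univ, Fintype.card_fin, nsmul_eq_mul, nsmul_eq_mul]
    _ ≤ p * A + n * B := by gcongr

theorem sum_E1_truncatedExp_le {n p : ℕ} {θ : Fin n → ℝ} (hθ : θ ∈ nearlyBlack n p)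
    (hq : 0 ≤ q) (hl : 0 ≤ l) :
    ∑ i, E1 (θ i) (truncatedExp q l) ≤
      p * l + n * (4 * (Real.sqrt l * q + l * Real.exp (-l))) := by
  refine sum_le_of_mem_nearlyBlack hθ hl (by positivity)
    (fun i => E1_le measurable_truncatedExp (abs_truncatedExp_le hq hl) _) fun i hi => ?_
  rw [hi]
  exact E1_zero_truncatedExp_le hq hl

end DataExpectation

section Contraction

variable {P : Prior}

theorem exists_postVar_le_mul_truncatedExp (hP : P.IsProper) (ha : 1 / 2 ≤ P.a) (ha' : P.a < 1) :
    ∃ C > 0, ∀ τ l, 0 < τ → τ ^ 2 ≤ 1 → P.t₀ * τ ^ 2 ≤ 1 → 1 ≤ l →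
      Real.exp (-l) ≤ τ ^ (2 * P.a) →
        ∀ x, postVar P τ x ≤ C * truncatedExp (τ ^ (2 * P.a)) l x := by
  obtain ⟨C₁, hC₁, hsmall⟩ := exists_postVar_le_rpow_mul_exp hP ha ha'
  obtain ⟨C₂, hC₂, hlarge⟩ := exists_postVar_le_mul hP
  refine ⟨C₁ + C₂, by positivity, fun τ l hτ hτ1 hτ2 hl hexp x => ?_⟩
  rw [truncatedExp, mul_min_of_nonneg _ _ (by positivity)]
  refine le_min ((hsmall τ hτ hτ1 x).trans ?_) ((hlarge τ l hτ hτ2 hl hexp x).trans ?_)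
  · rw [mul_assoc]
    exact mul_le_mul_of_nonneg_right (le_add_of_nonneg_right hC₂.le) (by positivity)
  · exact mul_le_mul_of_nonneg_right (le_add_of_nonneg_left hC₁.le) (by positivity)

theorem EN_postProb_le_of_postVar_le (hP : P.IsProper) {τ C R q l : ℝ} (hτ : 0 < τ) (hC : 0 ≤ C)
    (hR : 0 < R) (hq : 0 ≤ q) (hl : 0 ≤ l) (hvar : ∀ y, postVar P τ y ≤ C * truncatedExp q l y)
    {n p : ℕ} {θ₀ : Fin n → ℝ} (hθ₀ : θ₀ ∈ nearlyBlack n p) :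
    EN n θ₀ (fun x => postProb P τ x {θ | R < ∑ i, (θ i - T P τ (x i)) ^ 2}) ≤
      C / R * (p * l + n * (4 * (Real.sqrt l * q + l * Real.exp (-l)))) := by
  have hint (i : Fin n) :
      Integrable fun y => C / R * truncatedExp q l y * gauss (y - θ₀ i) := by
    simpa only [mul_assoc] using (integrable_mul_gauss_sub measurable_truncatedExp
      (abs_truncatedExp_le hq hl) (θ₀ i)).const_mul (C / R)
  have hpost (x : Fin n → ℝ) : postProb P τ x {θ | R < ∑ i, (θ i - T P τ (x i)) ^ 2} ≤
      ∑ i, C / R * truncatedExp q l (x i) := by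
    refine (postProb_lt_sum_sq_le hP hτ x hR).trans (Finset.sum_le_sum fun i _ => ?_)
    rw [div_mul_eq_mul_div]
    exact div_le_div_of_nonneg_right (hvar _) hR.le
  calc EN n θ₀ (fun x => postProb P τ x {θ | R < ∑ i, (θ i - T P τ (x i)) ^ 2})
      ≤ ∑ i, E1 (θ₀ i) (fun y => C / R * truncatedExp q l y) :=
        EN_le_sum_E1 hint (fun x => postProb_nonneg x _) hpost
    _ = C / R * ∑ i, E1 (θ₀ i) (truncatedExp q l) := by
        simp only [E1, mul_assoc, integral_const_mul, Finset.mul_sum]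
    _ ≤ _ := by gcongr; exact sum_E1_truncatedExp_le hθ₀ hq hl

theorem EN_postProb_eq_zero_of_not_isProper (hP : ¬P.IsProper) {τ : ℝ} (hτ : 0 < τ) {n : ℕ}
    (hn : 0 < n) (θ₀ : Fin n → ℝ) (A : (Fin n → ℝ) → Set (Fin n → ℝ)) :
    EN n θ₀ (fun x => postProb P τ x (A x)) = 0 := by
  simp only [EN, postProb_eq_zero_of_not_isProper hP hτ hn, zero_mul, integral_zero]

theorem exists_EN_postProb_le (ha : 1 / 2 ≤ P.a) (ha' : P.a < 1) :
    ∃ C, ∀ᶠ τ in 𝓝[>] 0, ∀ n p : ℕ, 0 < p → 1 ≤ Real.log (n / p) →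
      τ ^ (2 * P.a) = p / n * Real.sqrt (Real.log (n / p)) →
      ∀ M > 0, ∀ θ₀ ∈ nearlyBlack n p, EN n θ₀ (fun x => postProb P τ x
        {θ | M * p * Real.log (n / p) < ∑ i, (θ i - T P τ (x i)) ^ 2}) ≤ C / M := by
  have hn {n p : ℕ} (hl : 1 ≤ Real.log (n / p)) : 0 < n :=
    Nat.pos_of_ne_zero fun hn => by norm_num [hn] at hl
  by_cases hP : P.IsProper
  · obtain ⟨C, hC, hvar⟩ := exists_postVar_le_mul_truncatedExp hP ha ha'
    have hlim (c : ℝ) : Tendsto (fun τ : ℝ => c * τ ^ 2) (𝓝[>] 0) (𝓝 0) :=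
      (Continuous.tendsto' (by fun_prop) _ _ (by simp)).mono_left nhdsWithin_le_nhds
    refine ⟨9 * C, ?_⟩
    filter_upwards [self_mem_nhdsWithin, (hlim 1).eventually_le_const one_pos,
      (hlim P.t₀).eventually_le_const one_pos] with τ (hτ : 0 < τ) hτ1 hτ2 n p hp hl hq M hM θ₀ hθ₀
    have hn := hn hl
    have hexp : Real.exp (-Real.log (n / p)) = p / n := by
      rw [Real.exp_neg, Real.exp_log (by positivity), inv_div]
    refine (EN_postProb_le_of_postVar_le hP hτ hC.le (by positivity) (by positivity)
      (zero_le_one.trans hl) (hvar τ _ hτ (by simpa using hτ1) hτ2 hl ?_) hθ₀).trans_eq ?_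
    · rw [hexp, hq]
      exact le_mul_of_one_le_right (by positivity) (Real.one_le_sqrt.2 hl)
    · rw [hexp, hq, mul_left_comm (Real.sqrt _), Real.mul_self_sqrt (zero_le_one.trans hl)]
      field_simp
      ring
  · refine ⟨0, ?_⟩
    filter_upwards [self_mem_nhdsWithin] with τ hτ n p _ hl _ M _ θ₀ _
    rw [EN_postProb_eq_zero_of_not_isProper hP hτ (hn hl), zero_div]

end Contraction

section SparsityScale

theorem tendsto_mul_sqrt_log_inv_rpow {s : ℝ} (hs : 0 < s) :
    Tendsto (fun r : ℝ => (r * Real.sqrt (Real.log r⁻¹)) ^ s) (𝓝[>] 0) (𝓝[>] 0) := by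
  have hle : ∀ᶠ r : ℝ in 𝓝[>] 0, r * Real.sqrt (Real.log r⁻¹) ≤ Real.sqrt r := by
    filter_upwards [self_mem_nhdsWithin] with r (hr : 0 < r)
    calc r * Real.sqrt (Real.log r⁻¹) ≤ r * Real.sqrt r⁻¹ := by
          gcongr; exact Real.log_le_self (by positivity)
      _ = Real.sqrt r := by rw [Real.sqrt_inv, ← div_eq_mul_inv, Real.div_sqrt]
  have hsqrt : Tendsto Real.sqrt (𝓝[>] 0) (𝓝 0) :=
    (Real.continuous_sqrt.tendsto' 0 0 Real.sqrt_zero).mono_left nhdsWithin_le_nhds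
  have hpos : ∀ᶠ r : ℝ in 𝓝[>] 0, 0 < r * Real.sqrt (Real.log r⁻¹) := by
    filter_upwards [Ioo_mem_nhdsGT one_pos] with r hr
    exact mul_pos hr.1 (Real.sqrt_pos.2 (Real.log_pos (one_lt_inv₀ hr.1 |>.2 hr.2)))
  have hlim := squeeze_zero' (hpos.mono fun _ => le_of_lt) hle hsqrt
  refine tendsto_nhdsWithin_iff.2 ⟨?_, hpos.mono fun r hr => Real.rpow_pos_of_pos hr s⟩
  simpa only [Real.zero_rpow hs.ne'] using hlim.rpow_const (Or.inr hs.le)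

theorem tendsto_log_inv_nhdsGT_zero :
    Tendsto (fun r : ℝ => Real.log r⁻¹) (𝓝[>] 0) atTop :=
  Real.tendsto_log_atTop.comp tendsto_inv_nhdsGT_zero

theorem tendsto_natCast_div_natCast_nhdsGT_zero {p : ℕ → ℕ} (hp : ∀ᶠ n in atTop, 0 < p n)
    (hpo : (fun n => (p n : ℝ)) =o[atTop] (fun n => (n : ℝ))) :
    Tendsto (fun n => (p n : ℝ) / n) atTop (𝓝[>] 0) := by
  refine tendsto_nhdsWithin_iff.2 ⟨hpo.tendsto_div_nhds_zero, ?_⟩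
  filter_upwards [hp, eventually_gt_atTop 0] with n hpn hn
  exact mem_Ioi.2 (by positivity)

end SparsityScale

end OneGroup

theorem posterior_contraction_around_posterior_mean_general (P : Prior) (ha : 1 / 2 ≤ P.a)
    (ha' : P.a < 1) (p : ℕ → ℕ) (hp : ∀ᶠ n in atTop, 0 < p n)
    (hpo : (fun n => (p n : ℝ)) =o[atTop] (fun n => (n : ℝ)))
    (Mseq : ℕ → ℝ) (hM : Tendsto Mseq atTop atTop) :
    ∀ ε > (0 : ℝ), ∃ N : ℕ, ∀ n ≥ N, ∀ θ₀ ∈ nearlyBlack n (p n),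
      EN n θ₀ (fun x => postProb P
        (((p n : ℝ) / (n : ℝ) * Real.sqrt (Real.log ((n : ℝ) / (p n : ℝ)))) ^ (1 / (2 * P.a))) x
        {θ : Fin n → ℝ |
          Mseq n * (p n : ℝ) * Real.log ((n : ℝ) / (p n : ℝ)) <
            ∑ i, (θ i - T P
              (((p n : ℝ) / (n : ℝ) * Real.sqrt (Real.log ((n : ℝ) / (p n : ℝ)))) ^ (1 / (2 * P.a)))
              (x i)) ^ 2}) < ε := by
  intro ε hε
  obtain ⟨C, hC⟩ := exists_EN_postProb_le ha ha'
  have h2a : 0 < 2 * P.a := mul_pos two_pos P.a_pos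
  have hr := tendsto_natCast_div_natCast_nhdsGT_zero hp hpo
  have hlog := (tendsto_log_inv_nhdsGT_zero.comp hr).eventually_ge_atTop 1
  have hτ := (tendsto_mul_sqrt_log_inv_rpow (one_div_pos.2 h2a)).comp hr
  have hCM : Tendsto (fun n => C / Mseq n) atTop (𝓝 0) := hM.const_div_atTop C
  refine eventually_atTop.1 ?_
  filter_upwards [hτ.eventually hC, hlog, hp, hM.eventually_gt_atTop 0,
    hCM.eventually_lt_const hε] with n hbound hl hpn hMn hCn θ₀ hθ₀
  simp only [Function.comp_apply, inv_div] at hbound hl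
  refine (hbound n (p n) hpn hl ?_ _ hMn θ₀ hθ₀).trans_lt hCn
  rw [← Real.rpow_mul (by positivity), one_div_mul_cancel h2a.ne', Real.rpow_one]

/-- Theorem 3.4: with `τ_n = ((p_n/n)√(log(n/p_n)))^{1/(2a)}`, the
posterior contracts around the Bayes estimator at least as fast as the minimax risk. -/
theorem posterior_contraction_around_posterior_mean (P : Prior) (ha : 1/2 ≤ P.a) (ha' : P.a < 1)
    (p : ℕ → ℕ)
    (hp : Tendsto p atTop atTop)
    (hpo : (fun n => (p n : ℝ)) =o[atTop] (fun n => (n : ℝ)))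
    (Mseq : ℕ → ℝ) (hM : Tendsto Mseq atTop atTop) :
    ∀ ε > (0:ℝ), ∃ N : ℕ, ∀ n ≥ N, ∀ θ₀ ∈ nearlyBlack n (p n),
      EN n θ₀ (fun x => postProb P
        (((p n : ℝ) / (n : ℝ) * Real.sqrt (Real.log ((n : ℝ) / (p n : ℝ)))) ^ (1 / (2 * P.a))) x
        {θ : Fin n → ℝ |
          Mseq n * (p n : ℝ) * Real.log ((n : ℝ) / (p n : ℝ)) <
            ∑ i, (θ i - T P
              (((p n : ℝ) / (n : ℝ) * Real.sqrt (Real.log ((n : ℝ) / (p n : ℝ)))) ^ (1 / (2 * P.a)))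
              (x i)) ^ 2}) < ε :=
  posterior_contraction_around_posterior_mean_general P ha ha' p
    (hp.eventually_gt_atTop 0) hpo Mseq hM
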